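/- Let p_j denote the j-th prime, let d be an integer with p_j ≤ d ≤ p_{j+1}, and let α ∈ (0, 1/6) satisfy log(p_j)/log(p_{j+1}) > 6α. Then for every ε ∈ (0, 1) there exist a constant C > 0 and infinitely many positive integers m such that for each such m there is a (d+1)-regular finite simple graph G_m on m vertices satisfying: (1) girth(G_m) ≥ 2α·log_{2d-1}(m); and (2) the adjacency matrix A(G_m) has ⌊α·log_d(m)⌋ distinct eigenvalues, each admitting a (k, ε)-localized eigenvector for some k ≤ C·m^α. -/

import Mathlib

open Classical

noncomputable section

namespace Formal

variable {V : Type*} [Fintype V] [DecidableEq V]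

/-- The real adjacency matrix of a finite simple graph. -/
def adjMat (G : SimpleGraph V) : Matrix V V ℝ :=
  letI := Classical.decRel G.Adj
  SimpleGraph.adjMatrix ℝ G

lemma adjMat_isHermitian (G : SimpleGraph V) : (adjMat G).IsHermitian := by
  letI := Classical.decRel G.Adj
  unfold adjMat
  rw [Matrix.IsHermitian, Matrix.conjTranspose_eq_transpose_of_trivial]
  exact SimpleGraph.isSymm_adjMatrix G

/-- `G` is `k`-regular: every vertex has exactly `k` neighbours. -/
def IsRegular (G : SimpleGraph V) (k : ℕ) : Prop :=
  ∀ v : V, (G.neighborSet v).ncard = k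

/-- The eigenvalues (with multiplicity) of the adjacency matrix, indexed by vertices. -/
def eigs (G : SimpleGraph V) : V → ℝ :=
  (adjMat_isHermitian G).eigenvalues

/-- The absolute values of the adjacency eigenvalues, sorted in increasing order. -/
def sortedAbsEigs (G : SimpleGraph V) : List ℝ :=
  (Finset.univ.val.map fun i => |eigs G i|).sort (· ≤ ·)

/-- `λ(G)`: the second largest absolute value of an eigenvalue (with multiplicity). -/
def secondLargestAbsEig (G : SimpleGraph V) : ℝ :=
  (sortedAbsEigs G).getD (Fintype.card V - 2) 0

/-- `λ₃(G)`: the third largest absolute value of an eigenvalue (with multiplicity). -/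
def thirdLargestAbsEig (G : SimpleGraph V) : ℝ :=
  (sortedAbsEigs G).getD (Fintype.card V - 3) 0

/-- `μ` has a `(k, ε)`-localized (ℓ²-normalized) eigenvector for `A(G)`. -/
def HasLocalizedEigenvector (G : SimpleGraph V) (μ : ℝ) (k : ℕ) (ε : ℝ) : Prop :=
  ∃ v : V → ℝ, (adjMat G).mulVec v = μ • v ∧ (∑ x, (v x) ^ 2) = 1 ∧
    ∃ S : Finset V, S.card = k ∧ ε ≤ ∑ x ∈ S, (v x) ^ 2

/-- There are `r` distinct eigenvalues of `A(G)`, each with a `(k, ε)`-localized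
eigenvector for some `k ≤ bound`. -/
def LocalizedSpectrum (G : SimpleGraph V) (r : ℕ) (ε bound : ℝ) : Prop :=
  ∃ Λ : Finset ℝ, Λ.card = r ∧
    ∀ μ ∈ Λ, ∃ k : ℕ, (k : ℝ) ≤ bound ∧ HasLocalizedEigenvector G μ k ε

/-- `girth(G) ≥ x` for a real number `x` (`girth = ⊤` counts as `≥ x`). -/
def girthGe {W : Type*} (G : SimpleGraph W) (x : ℝ) : Prop :=
  ∀ g : ℕ, G.girth = g → x ≤ g

/-- `girth(G) > x` for a real number `x` (`girth = ⊤` counts as `> x`). -/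
def girthGt {W : Type*} (G : SimpleGraph W) (x : ℝ) : Prop :=
  ∀ g : ℕ, G.girth = g → x < g

/-- The `j`-th prime, so `nthPrime 1 = 2`, `nthPrime 2 = 3`, ..., `nthPrime 10 = 29`. -/
def nthPrime (j : ℕ) : ℕ :=
  Nat.nth Nat.Prime (j - 1)

/-!
Two rooted `d`-ary trees, of heights `k + 1` and `k`, are hung below a common apex, and their leaves
are joined to each other so that a leaf of the taller tree gets one new edge and a leaf of the
shorter one gets `d`. A function of the height that vanishes at the apex and at height `0`, taken
with opposite signs on the two sides, is then an eigenvector as soon as it satisfies the three-term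
recurrence of the `d`-ary tree; the eigenvalues are `2√d cos (jπ / (k + 2))`. Its support
consists of vertices whose degree is already `d + 1`, so it survives in every `(d + 1)`-regular
graph containing the joined trees.

The joining edges and the extension to a regular graph both come from one argument: a bipartite
graph with prescribed maximal degrees and no cycle shorter than `g`, taken with as many edges as
possible, attains these degrees, since otherwise an edge could be added, or one edge far from the
deficient vertices could be replaced by two. Far edges exist once balls of radius `g` are small.
In the joined trees a non-backtracking walk has `d` continuations at each vertex of positive
height but only one at height `0`; with suitable edge weights the walks grow like
`√(2d - 1)` per step, and this gives the girth `2α log_{2d - 1} m`.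
-/

section Girth

open SimpleGraph

variable {U : Type*} {G : SimpleGraph U}

lemma edist_le_edist_add_one (x : U) {a b : U} (h : G.Adj a b) :
    G.edist x b ≤ G.edist x a + 1 :=
  (SimpleGraph.edist_triangle (v := a)).trans (by gcongr; exact (edist_eq_one_iff_adj.2 h).le)

lemma le_add_length_of_forall_adj {φ : U → ℕ∞} (hφ : ∀ a b, G.Adj a b → φ b ≤ φ a + 1)
    {x y : U} (p : G.Walk x y) : φ y ≤ φ x + p.length := by
  induction p with
  | nil => simp
  | @cons a b c h p ih =>
    calc φ c ≤ φ b + p.length := ih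
      _ ≤ φ a + 1 + p.length := by gcongr; exact hφ _ _ h
      _ = φ a + (Walk.cons h p).length := by
        rw [Walk.length_cons]; push_cast; ring

lemma le_add_edist_of_forall_adj {φ : U → ℕ∞} (hφ : ∀ a b, G.Adj a b → φ b ≤ φ a + 1) (x y : U) :
    φ y ≤ φ x + G.edist x y := by
  by_cases h : G.edist x y = ⊤
  · simp [h]
  · obtain ⟨p, hp⟩ := exists_walk_of_edist_ne_top h
    exact hp ▸ le_add_length_of_forall_adj hφ p

lemma min_le_edist_sup_edge (u v a b : U) :
    min (G.edist a b) (min (G.edist a u + 1 + G.edist v b) (G.edist a v + 1 + G.edist u b)) ≤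
      (G ⊔ edge u v).edist a b := by
  set φ : U → ℕ∞ := fun b =>
    min (G.edist a b) (min (G.edist a u + 1 + G.edist v b) (G.edist a v + 1 + G.edist u b))
  suffices hφ : ∀ p q, (G ⊔ edge u v).Adj p q → φ q ≤ φ p + 1 by
    simpa [φ] using le_add_edist_of_forall_adj hφ a b
  intro p q hpq
  simp only [φ, min_add]
  simp only [sup_adj, edge_adj] at hpq
  rcases hpq with h | ⟨⟨rfl, rfl⟩ | ⟨rfl, rfl⟩, -⟩
  · simp only [add_assoc _ _ (1 : ℕ∞)]
    gcongr <;> exact edist_le_edist_add_one _ h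
  · refine le_min (min_le_of_right_le (min_le_of_left_le ?_))
      (le_min (min_le_of_right_le (min_le_of_left_le ?_)) (min_le_of_left_le ?_))
    · simp
    · rw [SimpleGraph.edist_self, add_zero, add_assoc (_ + 1)]
      exact le_self_add
    · rw [add_assoc, add_assoc]
      exact le_self_add
  · refine le_min (min_le_of_right_le (min_le_of_right_le ?_))
      (le_min (min_le_of_left_le ?_) (min_le_of_right_le (min_le_of_right_le ?_)))
    · simp
    · rw [add_assoc, add_assoc]
      exact le_self_add
    · rw [SimpleGraph.edist_self, add_zero, add_assoc (_ + 1)]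
      exact le_self_add

lemma edist_sdiff_edge_snd_add_one_le_length {u : U} {c : G.Walk u u} (hc : c.IsCycle) :
    (G \ edge u c.snd).edist u c.snd + 1 ≤ c.length := by
  cases c with
  | nil => simp at hc
  | @cons _ v _ h p =>
    rw [Walk.snd_cons, Walk.length_cons, SimpleGraph.edist_comm]
    have hp := Walk.edist_le (p.toDeleteEdge s(u, v) ((Walk.cons_isCycle_iff p h).1 hc).2)
    rw [Walk.length_transfer] at hp
    push_cast
    gcongr
    exact hp

lemma edist_sdiff_edge_add_one_le_length {w : U} {c : G.Walk w w} (hc : c.IsCycle) {u v : U}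
    (huv : s(u, v) ∈ c.edges) : (G \ edge u v).edist u v + 1 ≤ c.length := by
  have hu : u ∈ c.support := c.fst_mem_support_of_mem_edges huv
  have hcycle : (c.rotate u hu).IsCycle := (Walk.isCycle_rotate hu).2 hc
  have hadj : v ∈ (c.rotate u hu).toSubgraph.neighborSet u := by
    rw [Subgraph.mem_neighborSet, Walk.adj_toSubgraph_iff_mem_edges]
    exact (c.rotate_edges u hu).mem_iff.2 huv
  rw [← c.length_rotate u hu]
  rw [hcycle.neighborSet_toSubgraph_endpoint] at hadj
  rcases hadj with rfl | rfl
  · exact edist_sdiff_edge_snd_add_one_le_length hcycle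
  · have := edist_sdiff_edge_snd_add_one_le_length hcycle.reverse
    rwa [Walk.snd_reverse, Walk.length_reverse] at this

lemma egirth_le_edist_sdiff_edge_add_one {u v : U} (huv : G.Adj u v) :
    G.egirth ≤ (G \ edge u v).edist u v + 1 := by
  by_cases htop : (G \ edge u v).edist u v = ⊤
  · simp [htop]
  obtain ⟨p, hp⟩ := exists_walk_of_edist_ne_top htop
  have hnotMem : s(u, v) ∉ (p.bypass.reverse.mapLe sdiff_le).edges := by
    rw [Walk.edges_mapLe_eq_edges]
    exact fun h => ((edgeSet_sdiff _ _ ▸ Walk.edges_subset_edgeSet _ h).2)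
      (by simp [edge, huv.ne])
  have hcycle := (Walk.cons_isCycle_iff _ huv).2
    ⟨(p.bypass_isPath.reverse.mapLe sdiff_le), hnotMem⟩
  refine (egirth_le_length hcycle).trans ?_
  rw [← hp, Walk.length_cons, Walk.length_map, Walk.length_reverse]
  exact_mod_cast Nat.add_le_add_right p.length_bypass_le_length 1

lemma min_egirth_le_egirth_sup_edge (u v : U) :
    min G.egirth (G.edist u v + 1) ≤ (G ⊔ edge u v).egirth := by
  rw [le_egirth]
  intro w c hc
  by_cases huv : s(u, v) ∈ c.edges
  · refine min_le_of_right_le (le_trans ?_ (edist_sdiff_edge_add_one_le_length hc huv))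
    gcongr
    rw [sup_sdiff_right_self]
    exact sdiff_le
  · have hG : ∀ e ∈ c.edges, e ∈ G.edgeSet := by
      intro e he
      have hmem : e ∈ (G ⊔ edge u v).edgeSet := Walk.edges_subset_edgeSet c he
      rw [edgeSet_sup] at hmem
      refine hmem.resolve_right fun hedge => huv ?_
      rw [edge, edgeSet_fromEdgeSet] at hedge
      exact Set.mem_singleton_iff.1 hedge.1 ▸ he
    refine min_le_of_left_le ((egirth_le_length (hc.transfer hG)).trans ?_)
    rw [Walk.length_transfer]

lemma le_egirth_switch {g : ℕ∞} (hG : g ≤ G.egirth) {z q z₀ q₀ : U} (hzq : G.Adj z q)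
    (hz₀ : g ≤ G.edist z z₀) (hq₀ : g ≤ G.edist z q₀) :
    g ≤ (G \ edge z q ⊔ edge z₀ q ⊔ edge z q₀).egirth := by
  have hle (x y : U) : G.edist x y ≤ (G \ edge z q).edist x y := edist_anti sdiff_le
  have hz₀q : g ≤ (G \ edge z q).edist z₀ q + 1 :=
    calc g ≤ G.edist z z₀ := hz₀
      _ ≤ G.edist z q + G.edist q z₀ := SimpleGraph.edist_triangle
      _ = G.edist z₀ q + 1 := by
        rw [edist_eq_one_iff_adj.2 hzq, SimpleGraph.edist_comm (u := q), add_comm]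
      _ ≤ _ := by gcongr; exact sdiff_le
  have hfirst : g ≤ (G \ edge z q ⊔ edge z₀ q).egirth :=
    (le_min (hG.trans (egirth_anti sdiff_le)) hz₀q).trans (min_egirth_le_egirth_sup_edge _ _)
  refine (le_min hfirst (le_trans ?_ (add_le_add_left (min_le_edist_sup_edge _ _ _ _) 1))).trans
    (min_egirth_le_egirth_sup_edge _ _)
  rw [min_add, min_add]
  refine le_min (hq₀.trans ((hle _ _).trans le_self_add)) (le_min ?_ ?_)
  · refine hz₀.trans ((hle _ _).trans ?_)
    simp [add_assoc]
  · refine hG.trans ((egirth_le_edist_sdiff_edge_add_one hzq).trans ?_)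
    rw [add_assoc (_ + 1)]
    exact le_self_add

lemma isAcyclic_of_forall_adj_ne {height : U → ℕ} (hne : ∀ u v, G.Adj u v → height u ≠ height v)
    (hup : ∀ u v w, G.Adj u v → G.Adj u w → height u < height v → height u < height w → v = w) :
    G.IsAcyclic := by
  intro w c hc
  obtain ⟨u, hu, hmin⟩ := Finset.exists_min_image c.support.toFinset height ⟨w, by simp⟩
  rw [List.mem_toFinset] at hu
  have hcycle : (c.rotate u hu).IsCycle := (Walk.isCycle_rotate hu).2 hc
  have higher {v : U} (hadj : G.Adj u v) (hv : v ∈ (c.rotate u hu).support) :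
      height u < height v :=
    (hmin v (by simpa [Walk.mem_support_rotate_iff] using hv)).lt_of_ne (hne u v hadj)
  have hsnd := Walk.adj_snd hcycle.not_nil
  have hpen := (Walk.adj_penultimate hcycle.not_nil).symm
  exact hcycle.snd_ne_penultimate (hup u _ _ hsnd hpen
    (higher hsnd (Walk.getVert_mem_support _ _)) (higher hpen (Walk.getVert_mem_support _ _)))

lemma not_isAcyclic_of_two_le_ncard [Finite U] [Nonempty U]
    (h : ∀ v, 2 ≤ (G.neighborSet v).ncard) : ¬ G.IsAcyclic := by
  have := Fintype.ofFinite U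
  intro hG
  have paths (n : ℕ) : ∃ (u v : U) (p : G.Walk u v), p.IsPath ∧ p.length = n := by
    induction n with
    | zero =>
      obtain ⟨u⟩ := ‹Nonempty U›
      exact ⟨u, u, Walk.nil, Walk.IsPath.nil, rfl⟩
    | succ n ih =>
      obtain ⟨u, v, p, hp, hn⟩ := ih
      obtain ⟨w, hw, hne⟩ := Set.exists_ne_of_one_lt_ncard (h u) p.snd
      have hmem : w ∉ p.support := fun hmem => hne (hG.eq_snd_of_adj_start hp hw hmem)
      exact ⟨w, v, Walk.cons (G.adj_symm hw) p, hp.cons hmem, by simp [hn]⟩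
  obtain ⟨u, v, p, hp, hn⟩ := paths (Fintype.card U)
  exact hp.length_lt.ne hn

lemma girthGe_of_le_egirth {g : ℕ} (hg : (g : ℕ∞) ≤ G.egirth) (hcyc : ¬ G.IsAcyclic) {x : ℝ}
    (hx : x ≤ g) : girthGe G x := by
  rintro _ rfl
  have htop : G.egirth ≠ ⊤ := mt egirth_eq_top.1 hcyc
  exact hx.trans (by exact_mod_cast hg.trans_eq (ENat.natCast_toNat htop).symm)

end Girth

section AdjacencyMatrix

open SimpleGraph

variable {U W : Type*}

lemma egirth_le_egirth_map (F : SimpleGraph U) (e : U ↪ W) : F.egirth ≤ (F.map e).egirth := by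
  rw [le_egirth]
  intro a c hc
  have hrange : ∀ w ∈ c.support, w ∈ Set.range e := by
    intro w hw
    obtain ⟨s, hs, hws⟩ :=
      (Walk.mem_support_iff_exists_mem_edges_of_not_nil hc.not_nil).1 hw
    obtain ⟨x, rfl⟩ := Sym2.mem_iff_exists.1 hws
    obtain ⟨u, -, -, rfl, -⟩ := (map_adj e F w x).1 (Walk.edges_subset_edgeSet c hs)
    exact ⟨u, rfl⟩
  set c' := c.induce (Set.range e) hrange
  set ι : (F.map e).induce (Set.range e) ↪g F.map e := SimpleGraph.Embedding.induce _
  have hmap : c'.map ι.toHom = c := Walk.map_induce _ _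
  have hc' : c'.IsCycle := (Walk.isCycle_map_iff_of_injective ι.injective).1 (hmap ▸ hc)
  calc F.egirth = _ := (SimpleGraph.Embedding.map e F).isoInduceRange.egirth_eq
    _ ≤ c'.length := egirth_le_length hc'
    _ = (c'.map ι.toHom).length := by rw [Walk.length_map]
    _ = c.length := congrArg _ (congrArg Walk.length hmap)

lemma neighborSet_map_of_notMem_range (F : SimpleGraph U) {e : U ↪ W} {w : W}
    (hw : w ∉ Set.range e) : (F.map e).neighborSet w = ∅ := by
  refine Set.eq_empty_of_forall_notMem fun x hx => ?_
  obtain ⟨u, -, -, rfl, -⟩ := (map_adj e F w x).1 hx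
  exact hw ⟨u, rfl⟩

variable [Fintype U] [Fintype W]

lemma adjMat_mulVec_apply (G : SimpleGraph U) (y : U → ℝ) (v : U) :
    (adjMat G).mulVec y v = ∑ w with G.Adj v w, y w := by
  rw [adjMat, adjMatrix_mulVec_apply]
  exact Finset.sum_congr (by ext; simp) fun _ _ => rfl

lemma adjMat_sup_mulVec {F D : SimpleGraph U} (h : Disjoint F D)
    (y : U → ℝ) : (adjMat (F ⊔ D)).mulVec y = (adjMat F).mulVec y + (adjMat D).mulVec y := by
  ext v
  have hdisj : Disjoint (Finset.univ.filter (F.Adj v)) (Finset.univ.filter (D.Adj v)) :=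
    Finset.disjoint_filter.2 fun w _ hF hD => SimpleGraph.disjoint_left.1 h v w hF hD
  rw [Pi.add_apply, adjMat_mulVec_apply, adjMat_mulVec_apply, adjMat_mulVec_apply,
    ← Finset.sum_union hdisj, ← Finset.filter_or]
  exact Finset.sum_congr (by ext; simp) fun _ _ => rfl

lemma adjMat_mulVec_of_neighborSet_eq_empty {D : SimpleGraph U} {v : U}
    (hv : D.neighborSet v = ∅) (y : U → ℝ) : (adjMat D).mulVec y v = 0 := by
  rw [adjMat_mulVec_apply]
  refine Finset.sum_eq_zero fun w hw => ?_
  exact (hv.subset (Finset.mem_filter.1 hw).2 : w ∈ (∅ : Set U)).elim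

lemma adjMat_mulVec_of_le {F G : SimpleGraph U} (hFG : F ≤ G) {y : U → ℝ}
    (hy : ∀ v w, G.Adj v w → ¬ F.Adj v w → y w = 0) :
    (adjMat G).mulVec y = (adjMat F).mulVec y := by
  ext v
  rw [adjMat_mulVec_apply, adjMat_mulVec_apply]
  refine (Finset.sum_subset (fun w hw => ?_) fun w hw hw' => ?_).symm
  · exact Finset.mem_filter.2 ⟨Finset.mem_univ w, hFG (Finset.mem_filter.1 hw).2⟩
  · simp only [Finset.mem_filter, Finset.mem_univ, true_and] at hw hw'
    exact hy v w hw hw'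

lemma adjMat_map_mulVec_extend (F : SimpleGraph U) (e : U ↪ W) (y : U → ℝ) :
    (adjMat (F.map e)).mulVec (Function.extend e y 0) =
      Function.extend e ((adjMat F).mulVec y) 0 := by
  ext w
  rw [adjMat_mulVec_apply]
  by_cases hw : w ∈ Set.range e
  · obtain ⟨u, rfl⟩ := hw
    have hmem (x : W) : (F.map e).Adj (e u) x ↔ x ∈ e '' F.neighborSet u := by
      rw [← neighborSet_map, mem_neighborSet]
    rw [e.injective.extend_apply, adjMat_mulVec_apply]
    refine (Finset.sum_nbij e (fun v hv => ?_) e.injective.injOn (fun x hx => ?_)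
      fun v _ => (e.injective.extend_apply _ _ _).symm).symm
    · simpa [hmem] using hv
    · simpa [hmem] using hx
  · rw [Function.extend_apply' _ _ _ hw]
    refine Finset.sum_eq_zero fun x hx => ?_
    exact absurd (show x ∈ (F.map e).neighborSet w by simpa using hx)
      (by simp [neighborSet_map_of_notMem_range F hw])

lemma hasLocalizedEigenvector_of_mulVec_eq {G : SimpleGraph U} {y : U → ℝ} {μ ε : ℝ}
    {S : Finset U} (hμ : (adjMat G).mulVec y = μ • y) (hy : y ≠ 0) (hS : ∀ v ∉ S, y v = 0)
    (hε : ε ≤ 1) : HasLocalizedEigenvector G μ S.card ε := by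
  set c := (√(∑ x, y x ^ 2))⁻¹
  have hnorm : ∑ x, (c • y) x ^ 2 = 1 := by
    obtain ⟨v, hv⟩ := Function.ne_iff.1 hy
    have hpos : 0 < ∑ x, y x ^ 2 :=
      Finset.sum_pos' (fun _ _ => sq_nonneg _) ⟨v, Finset.mem_univ v, sq_pos_of_ne_zero hv⟩
    simp_rw [Pi.smul_apply, smul_eq_mul, mul_pow, ← Finset.mul_sum, c, inv_pow,
      Real.sq_sqrt hpos.le]
    exact inv_mul_cancel₀ hpos.ne'
  refine ⟨c • y, ?_, hnorm, S, rfl, ?_⟩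
  · rw [Matrix.mulVec_smul, hμ, smul_comm]
  · rw [Finset.sum_subset (Finset.subset_univ S) fun x _ hx => by simp [hS x hx], hnorm]
    exact hε

end AdjacencyMatrix

section Growth

open SimpleGraph

variable {U : Type*} {G : SimpleGraph U}

lemma exists_adj_edist_eq {v₀ v : U} {n : ℕ} (hv : G.edist v₀ v = (n + 1 : ℕ)) :
    ∃ u, G.Adj u v ∧ G.edist v₀ u = n := by
  obtain ⟨p, hp⟩ := exists_walk_of_edist_eq_coe hv
  have hnil : ¬ p.Nil := fun hnil => by
    have := Walk.length_eq_zero_iff.2 hnil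
    omega
  have hadj := p.adj_penultimate hnil
  refine ⟨p.penultimate, hadj, le_antisymm ?_ ?_⟩
  · refine (Walk.edist_le p.dropLast).trans ?_
    have := p.length_dropLast_add_one hnil
    exact_mod_cast (by omega : p.dropLast.length ≤ n)
  · have hle := edist_le_edist_add_one v₀ hadj
    rw [hv, Nat.cast_succ] at hle
    exact (ENat.add_le_add_iff_right ENat.one_ne_top).1 hle

lemma exists_le_edist_of_card_ball_le {S : Finset U} {a b : U} {g : ℕ∞} {N : ℝ}
    (ha : ((S.filter fun v => G.edist a v < g).card : ℝ) ≤ N)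
    (hb : ((S.filter fun v => G.edist b v < g).card : ℝ) ≤ N) (hS : 2 * N < S.card) :
    ∃ z ∈ S, g ≤ G.edist z a ∧ g ≤ G.edist z b := by
  by_contra! h
  have hsub : S ⊆ (S.filter fun v => G.edist a v < g) ∪ (S.filter fun v => G.edist b v < g) := by
    intro z hz
    simp only [Finset.mem_union, Finset.mem_filter, hz, true_and, G.edist_comm (v := z)]
    exact or_iff_not_imp_left.2 fun hza => h z hz (not_lt.1 hza)
  have hcard : (S.card : ℝ) ≤ (S.filter fun v => G.edist a v < g).card +
      (S.filter fun v => G.edist b v < g).card := by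
    exact_mod_cast (Finset.card_le_card hsub).trans (Finset.card_union_le _ _)
  linarith

variable [Fintype U]

/-- Nonnegative weights on the oriented edges of `G` for which the total weight of the
continuations of an oriented edge without backtracking is at most `x` times its own weight. -/
structure HasNonbacktrackingGrowth (G : SimpleGraph U) (W : U → U → ℝ) (x : ℝ) : Prop where
  nonneg : ∀ u v, 0 ≤ W u v
  sum_le : ∀ u v, G.Adj u v → ∑ w with G.Adj v w ∧ w ≠ u, W v w ≤ x * W u v

/-- The total weight of the oriented edges leading from distance `n` to distance `n + 1` from
`v₀`. -/
def outflow (G : SimpleGraph U) (W : U → U → ℝ) (v₀ : U) (n : ℕ) : ℝ :=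
  ∑ u with G.edist v₀ u = n, ∑ v with G.Adj u v ∧ G.edist v₀ v = (n + 1 : ℕ), W u v

variable {W : U → U → ℝ} {x : ℝ}

lemma outflow_eq_sum_inflow (v₀ : U) (n : ℕ) :
    outflow G W v₀ n =
      ∑ v with G.edist v₀ v = (n + 1 : ℕ), ∑ u with G.Adj u v ∧ G.edist v₀ u = n, W u v := by
  refine Finset.sum_comm' fun u v => ?_
  simp only [Finset.mem_filter, Finset.mem_univ, true_and]
  tauto

namespace HasNonbacktrackingGrowth

lemma outflow_zero_le (hW : HasNonbacktrackingGrowth G W x) (v₀ : U) :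
    outflow G W v₀ 0 ≤ ∑ w with G.Adj v₀ w, W v₀ w := by
  have hsphere : Finset.univ.filter (fun u => G.edist v₀ u = (0 : ℕ)) = {v₀} := by
    ext u
    simp [eq_comm (a := u)]
  rw [outflow, hsphere, Finset.sum_singleton]
  refine Finset.sum_le_sum_of_subset_of_nonneg (fun v hv => ?_) fun _ _ _ => hW.nonneg _ _
  simp only [Finset.mem_filter, Finset.mem_univ, true_and] at hv ⊢
  exact hv.1

lemma outflow_succ_le (hW : HasNonbacktrackingGrowth G W x) (hx : 0 ≤ x) (v₀ : U) (n : ℕ) :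
    outflow G W v₀ (n + 1) ≤ x * outflow G W v₀ n := by
  rw [outflow_eq_sum_inflow v₀ n, outflow, Finset.mul_sum]
  refine Finset.sum_le_sum fun v hv => ?_
  obtain ⟨u, huv, hu⟩ := exists_adj_edist_eq (Finset.mem_filter.1 hv).2
  calc ∑ w with G.Adj v w ∧ G.edist v₀ w = (n + 1 + 1 : ℕ), W v w
      ≤ ∑ w with G.Adj v w ∧ w ≠ u, W v w := by
        refine Finset.sum_le_sum_of_subset_of_nonneg (fun w hw => ?_) fun _ _ _ => hW.nonneg _ _
        simp only [Finset.mem_filter, Finset.mem_univ, true_and] at hw ⊢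
        refine ⟨hw.1, ?_⟩
        rintro rfl
        have : n = n + 1 + 1 := by exact_mod_cast hu.symm.trans hw.2
        omega
    _ ≤ x * W u v := hW.sum_le u v huv
    _ ≤ _ := by
        gcongr
        exact Finset.single_le_sum (f := fun u => W u v) (fun _ _ => hW.nonneg _ _)
          (by simp [huv, hu])

lemma outflow_le (hW : HasNonbacktrackingGrowth G W x) (hx : 0 ≤ x) (v₀ : U) (n : ℕ) :
    outflow G W v₀ n ≤ x ^ n * ∑ w with G.Adj v₀ w, W v₀ w := by
  induction n with
  | zero => simpa using hW.outflow_zero_le v₀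
  | succ n ih =>
    rw [pow_succ', mul_assoc]
    exact (hW.outflow_succ_le hx v₀ n).trans (mul_le_mul_of_nonneg_left ih hx)

variable {S : Finset U} {v₀ : U} {K : ℝ}

lemma card_sphere_le (hW : HasNonbacktrackingGrowth G W x) (hx : 0 ≤ x)
    (hS : ∀ u, ∀ v ∈ S, G.Adj u v → 1 ≤ W u v) (hK : ∑ w with G.Adj v₀ w, W v₀ w ≤ K) (n : ℕ) :
    ((S.filter fun v => G.edist v₀ v = (n + 1 : ℕ)).card : ℝ) ≤ x ^ n * K := by
  calc ((S.filter fun v => G.edist v₀ v = (n + 1 : ℕ)).card : ℝ)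
      = ∑ v ∈ S with G.edist v₀ v = (n + 1 : ℕ), (1 : ℝ) := by simp
    _ ≤ ∑ v ∈ S with G.edist v₀ v = (n + 1 : ℕ),
          ∑ u with G.Adj u v ∧ G.edist v₀ u = n, W u v := by
        refine Finset.sum_le_sum fun v hv => ?_
        rw [Finset.mem_filter] at hv
        obtain ⟨u, hadj, hu⟩ := exists_adj_edist_eq hv.2
        exact (hS u v hv.1 hadj).trans (Finset.single_le_sum (f := fun u => W u v)
          (fun _ _ => hW.nonneg _ _) (by simp [hadj, hu]))
    _ ≤ outflow G W v₀ n := by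
        rw [outflow_eq_sum_inflow]
        exact Finset.sum_le_sum_of_subset_of_nonneg (Finset.filter_subset_filter _
          (Finset.subset_univ _)) fun _ _ _ => Finset.sum_nonneg fun _ _ => hW.nonneg _ _
    _ ≤ x ^ n * K := (hW.outflow_le hx v₀ n).trans (by gcongr)

lemma card_ball_le (hW : HasNonbacktrackingGrowth G W x) (hx : 3 / 2 ≤ x)
    (hS : ∀ u, ∀ v ∈ S, G.Adj u v → 1 ≤ W u v) (hK : ∑ w with G.Adj v₀ w, W v₀ w ≤ K) (g : ℕ) :
    ((S.filter fun v => G.edist v₀ v < g).card : ℝ) ≤ 1 + 2 * K * x ^ g := by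
  have hK₀ : 0 ≤ K := (Finset.sum_nonneg fun _ _ => hW.nonneg _ _).trans hK
  rcases g with _ | n
  · simp only [Nat.cast_zero, not_lt_zero, Finset.filter_false, Finset.card_empty]
    positivity
  induction n with
  | zero =>
    have hsub : (S.filter fun v => G.edist v₀ v < (0 + 1 : ℕ)) ⊆ {v₀} := fun v hv => by
      have : v₀ = v := by simpa using (Finset.mem_filter.1 hv).2
      exact Finset.mem_singleton.2 this.symm
    have hcard : ((S.filter fun v => G.edist v₀ v < (0 + 1 : ℕ)).card : ℝ) ≤ 1 := by
      exact_mod_cast (Finset.card_le_card hsub).trans_eq (Finset.card_singleton v₀)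
    exact hcard.trans (le_add_of_nonneg_right (by positivity))
  | succ n ih =>
    have hsub : (S.filter fun v => G.edist v₀ v < (n + 1 + 1 : ℕ)) ⊆
        (S.filter fun v => G.edist v₀ v < (n + 1 : ℕ)) ∪
          (S.filter fun v => G.edist v₀ v = (n + 1 : ℕ)) := by
      intro v hv
      rw [← Finset.filter_or, Finset.mem_filter]
      rw [Finset.mem_filter, Nat.cast_succ (n + 1)] at hv
      exact ⟨hv.1, (Order.lt_add_one_iff_of_not_isMax (by simp)).1 hv.2 |>.lt_or_eq⟩
    have hcard : ((S.filter fun v => G.edist v₀ v < (n + 1 + 1 : ℕ)).card : ℝ) ≤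
        (S.filter fun v => G.edist v₀ v < (n + 1 : ℕ)).card +
          (S.filter fun v => G.edist v₀ v = (n + 1 : ℕ)).card := by
      exact_mod_cast (Finset.card_le_card hsub).trans (Finset.card_union_le _ _)
    have hsphere := hW.card_sphere_le (by linarith) hS hK n
    have hx₂ : 2 * x + 1 ≤ 2 * x ^ 2 := by nlinarith
    have hstep : x ^ n * K * (2 * x + 1) ≤ x ^ n * K * (2 * x ^ 2) := by gcongr
    calc ((S.filter fun v => G.edist v₀ v < (n + 1 + 1 : ℕ)).card : ℝ)
        ≤ 1 + 2 * K * x ^ (n + 1) + x ^ n * K := by linarith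
      _ = 1 + x ^ n * K * (2 * x + 1) := by ring
      _ ≤ 1 + x ^ n * K * (2 * x ^ 2) := by gcongr
      _ = 1 + 2 * K * x ^ (n + 1 + 1) := by ring

end HasNonbacktrackingGrowth

end Growth

section Layered

open SimpleGraph

variable {U : Type*} {G : SimpleGraph U} {d : ℕ}

lemma card_filter_adj [Fintype U] (v : U) :
    (Finset.univ.filter (G.Adj v)).card = (G.neighborSet v).ncard := by
  rw [Set.ncard_eq_toFinset_card', Set.toFinset_card, card_neighborSet_eq_degree,
    ← card_neighborFinset_eq_degree, neighborFinset_eq_filter]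

lemma card_filter_adj_ne_add_one [Fintype U] {u v : U} (huv : G.Adj u v) :
    (Finset.univ.filter fun w => G.Adj v w ∧ w ≠ u).card + 1 = (G.neighborSet v).ncard := by
  have herase : (Finset.univ.filter fun w => G.Adj v w ∧ w ≠ u) =
      (Finset.univ.filter (G.Adj v)).erase u := by
    ext w
    simp [and_comm]
  rw [← card_filter_adj, herase, Finset.card_erase_add_one (by simpa using huv.symm)]

lemma card_ball_le_of_ncard_le [Finite U] {k : ℕ} (hk : 2 ≤ k)
    (hG : ∀ v, (G.neighborSet v).ncard ≤ k + 1) (S : Finset U) (v₀ : U) (g : ℕ) :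
    ((S.filter fun v => G.edist v₀ v < g).card : ℝ) ≤ 1 + 2 * (k + 1) * k ^ g := by
  have := Fintype.ofFinite U
  have hgrowth : HasNonbacktrackingGrowth G (fun _ _ => 1) k := by
    refine ⟨fun _ _ => zero_le_one, fun u v huv => ?_⟩
    have := (card_filter_adj_ne_add_one huv).trans_le (hG v)
    simp only [Finset.sum_const, nsmul_one, mul_one]
    exact_mod_cast Nat.le_of_succ_le_succ this
  refine hgrowth.card_ball_le ?_ (fun _ _ _ _ => le_rfl) ?_ g
  · have : (2 : ℝ) ≤ k := by exact_mod_cast hk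
    linarith
  · simp only [Finset.sum_const, nsmul_one, card_filter_adj]
    exact_mod_cast hG v₀

/-- Every edge of `G` joins consecutive layers, where the layer of a vertex is its `height`. A
vertex above the ground has at most one neighbour above it and degree at most `d + 1`, a vertex on
the ground has degree at most two. -/
structure IsLayered (G : SimpleGraph U) (d : ℕ) (height : U → ℕ) : Prop where
  height_eq : ∀ u v, G.Adj u v → height v = height u + 1 ∨ height u = height v + 1
  eq_of_lt : ∀ u v w, 0 < height u → G.Adj u v → G.Adj u w → height u < height v →
    height u < height w → v = w
  ncard_le : ∀ v, 0 < height v → (G.neighborSet v).ncard ≤ d + 1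
  ncard_le_two : ∀ v, height v = 0 → (G.neighborSet v).ncard ≤ 2

lemma sum_le_of_unique_exception {ι : Type*} {s : Finset ι} {f : ι → ℝ} {p : ι → Prop} {a b : ℝ}
    {n : ℕ} (hf : ∀ i ∈ s, ¬ p i → f i ≤ a) (hp : ∀ i ∈ s, p i → f i ≤ b)
    (huniq : ∀ i ∈ s, ∀ j ∈ s, p i → p j → i = j) (ha : 0 ≤ a) (hab : a ≤ b)
    (hs : s.card ≤ n + 1) : ∑ i ∈ s, f i ≤ b + n * a := by
  have hone : ((s.filter p).card : ℝ) ≤ 1 := by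
    exact_mod_cast Finset.card_le_one.2 fun i hi j hj => by
      rw [Finset.mem_filter] at hi hj
      exact huniq i hi.1 j hj.1 hi.2 hj.2
  have htotal : ((s.filter p).card : ℝ) + (s.filter fun i => ¬ p i).card ≤ n + 1 := by
    exact_mod_cast (Finset.card_filter_add_card_filter_not (s := s) p).trans_le hs
  calc ∑ i ∈ s, f i = ∑ i ∈ s with p i, f i + ∑ i ∈ s with ¬ p i, f i :=
        (Finset.sum_filter_add_sum_filter_not s p f).symm
    _ ≤ (s.filter p).card • b + (s.filter fun i => ¬ p i).card • a := by
        refine add_le_add (Finset.sum_le_card_nsmul _ _ _ fun i hi => ?_)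
          (Finset.sum_le_card_nsmul _ _ _ fun i hi => ?_) <;> rw [Finset.mem_filter] at hi
        exacts [hp i hi.1 hi.2, hf i hi.1 hi.2]
    _ ≤ b + n * a := by
        simp only [nsmul_eq_mul]
        nlinarith

namespace IsLayered

variable {height : U → ℕ}

lemma isBipartite (hG : IsLayered G d height) : G.IsBipartite := by
  refine ⟨Coloring.mk (fun v => Fin.ofNat 2 (height v)) fun {u v} h heq => ?_⟩
  have := hG.height_eq u v h
  have := congrArg Fin.val heq
  simp only [Fin.val_ofNat] at this
  omega

lemma ncard_le_add_one (hG : IsLayered G d height) (hd : 1 ≤ d) (v : U) :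
    (G.neighborSet v).ncard ≤ d + 1 := by
  rcases (height v).eq_zero_or_pos with hv | hv
  · exact (hG.ncard_le_two v hv).trans (by omega)
  · exact hG.ncard_le v hv

/-- Weights of the oriented edges `u v` adapted to a layered graph. A step into a vertex of degree
`d + 1` above the ground continues without backtracking by steps of exactly `√(2d - 1)` times its
weight, which is what determines the base `d / √(2d - 1)`. -/
def stepWeight (d : ℕ) (height : U → ℕ) (u v : U) : ℝ :=
  if height u < height v then √(2 * d - 1) * (d / √(2 * d - 1)) ^ height u
  else (d / √(2 * d - 1)) ^ height v

lemma stepWeight_nonneg (u v : U) : 0 ≤ stepWeight d height u v := by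
  unfold stepWeight
  split_ifs <;> positivity

lemma stepWeight_of_ascent {u v : U} (h : height v = height u + 1) :
    stepWeight d height u v = √(2 * d - 1) * (d / √(2 * d - 1)) ^ height u :=
  if_pos (by omega)

lemma stepWeight_of_descent {u v : U} (h : height u = height v + 1) :
    stepWeight d height u v = (d / √(2 * d - 1)) ^ height v :=
  if_neg (by omega)

lemma sqrt_mul_div_pow_succ (hd : 2 ≤ d) (h : ℕ) :
    √(2 * d - 1) * (d / √(2 * d - 1)) ^ (h + 1) = d * (d / √(2 * d - 1)) ^ h := by
  have hd' : (2 : ℝ) ≤ d := by exact_mod_cast hd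
  have : √(2 * d - 1) ≠ 0 := (Real.sqrt_pos.2 (by linarith)).ne'
  rw [pow_succ]
  field_simp

lemma lower_of_ne (hG : IsLayered G d height) {v u w : U} (hv : 0 < height v) (hvu : G.Adj v u)
    (hu : height v < height u) (hvw : G.Adj v w) (hne : w ≠ u) : height v = height w + 1 :=
  (hG.height_eq v w hvw).resolve_left fun hw =>
    hne (hG.eq_of_lt v w u hv hvw hvu (by omega) hu)

lemma sum_stepWeight_ground (hG : IsLayered G d height) {v : U} {T : Finset U}
    (hT : ∀ w ∈ T, G.Adj v w) (hv : height v = 0) :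
    ∑ w ∈ T, stepWeight d height v w = T.card * √(2 * d - 1) := by
  rw [Finset.sum_congr rfl fun w hw => stepWeight_of_ascent
    ((hG.height_eq v w (hT w hw)).resolve_right (by omega)), hv]
  simp

lemma sum_stepWeight_descent {v : U} {T : Finset U} {h : ℕ} (hT : ∀ w ∈ T, height v = height w + 1)
    (hv : height v = h + 1) :
    ∑ w ∈ T, stepWeight d height v w = T.card * (d / √(2 * d - 1)) ^ h := by
  rw [Finset.sum_congr rfl fun w hw => stepWeight_of_descent (hT w hw),
    Finset.sum_congr rfl fun w hw => by rw [show height w = h by have := hT w hw; omega]]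
  simp

lemma sum_stepWeight_above_ground_le (hG : IsLayered G d height) (hd : 2 ≤ d) {v : U}
    {T : Finset U} {n h : ℕ} (hT : ∀ w ∈ T, G.Adj v w) (hcard : T.card ≤ n + 1)
    (hv : height v = h + 1) :
    ∑ w ∈ T, stepWeight d height v w ≤ (d + n) * (d / √(2 * d - 1)) ^ h := by
  have hd' : (1 : ℝ) ≤ d := by exact_mod_cast one_le_two.trans hd
  have hpow : (0 : ℝ) ≤ (d / √(2 * d - 1)) ^ h := by positivity
  rw [add_mul]
  refine sum_le_of_unique_exception (p := fun w => height v < height w) (fun w hw hvw => ?_)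
    (fun w hw hvw => ?_) (fun w hw w' hw' => ?_) hpow (le_mul_of_one_le_left hpow hd') hcard
  · have hvw' := (hG.height_eq v w (hT w hw)).resolve_left (by omega)
    rw [stepWeight_of_descent hvw', show height w = h by omega]
  · have hvw' := (hG.height_eq v w (hT w hw)).resolve_right (by omega)
    rw [stepWeight_of_ascent hvw', hv, sqrt_mul_div_pow_succ hd]
  · exact hG.eq_of_lt v w w' (by omega) (hT w hw) (hT w' hw')

variable [Fintype U]

lemma hasNonbacktrackingGrowth (hG : IsLayered G d height) (hd : 2 ≤ d) :
    HasNonbacktrackingGrowth G (stepWeight d height) √(2 * d - 1) := by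
  refine ⟨stepWeight_nonneg, fun u v huv => ?_⟩
  have hd' : (2 : ℝ) ≤ d := by exact_mod_cast hd
  have hcard := card_filter_adj_ne_add_one huv
  set T := Finset.univ.filter fun w => G.Adj v w ∧ w ≠ u
  have hT : ∀ w ∈ T, G.Adj v w ∧ w ≠ u := fun w hw => by simpa [T] using hw
  rcases Nat.eq_zero_or_pos (height v) with hv | hv
  · have hu := (hG.height_eq v u huv.symm).resolve_right (by omega)
    have hone : (T.card : ℝ) ≤ 1 := by
      exact_mod_cast (by have := hG.ncard_le_two v hv; omega : T.card ≤ 1)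
    rw [hG.sum_stepWeight_ground (fun w hw => (hT w hw).1) hv, stepWeight_of_descent hu, hv,
      pow_zero, mul_one]
    exact mul_le_of_le_one_left (Real.sqrt_nonneg _) hone
  obtain ⟨h, hvh⟩ := Nat.exists_eq_succ_of_ne_zero hv.ne'
  have hle : T.card ≤ d := by have := hG.ncard_le v hv; omega
  rcases hG.height_eq u v huv with huv' | huv'
  · refine (hG.sum_stepWeight_above_ground_le (n := d - 1) hd (fun w hw => (hT w hw).1)
      (by omega) hvh).trans_eq ?_
    rw [stepWeight_of_ascent huv', show height u = h by omega, ← mul_assoc,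
      Real.mul_self_sqrt (by linarith), Nat.cast_sub (by omega)]
    push_cast
    ring
  · rw [sum_stepWeight_descent (fun w hw => hG.lower_of_ne hv huv.symm (by omega) (hT w hw).1
      (hT w hw).2) hvh, stepWeight_of_descent huv', hvh, sqrt_mul_div_pow_succ hd]
    gcongr

lemma sum_stepWeight_start_le (hG : IsLayered G d height) (hd : 2 ≤ d) {v : U}
    (hv : height v ≤ 1) : ∑ w with G.Adj v w, stepWeight d height v w ≤ 2 * d := by
  have hcard := card_filter_adj (G := G) v
  set T := Finset.univ.filter fun w => G.Adj v w
  have hT : ∀ w ∈ T, G.Adj v w := fun w hw => by simpa [T] using hw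
  interval_cases hv₀ : height v
  · have htwo : (T.card : ℝ) ≤ 2 := by
      exact_mod_cast hcard.trans_le (hG.ncard_le_two v hv₀)
    have hsqrt : √(2 * d - 1) ≤ d := Real.sqrt_le_iff.2 ⟨by positivity, by
      nlinarith [sq_nonneg ((d : ℝ) - 1)]⟩
    rw [hG.sum_stepWeight_ground hT hv₀]
    gcongr
  · refine (hG.sum_stepWeight_above_ground_le hd hT
      (hcard.trans_le (hG.ncard_le v (by omega))) hv₀).trans_eq ?_
    ring

lemma card_ball_le (hG : IsLayered G d height) (hd : 2 ≤ d) {v₀ : U} (hv₀ : height v₀ ≤ 1)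
    (g : ℕ) :
    (((Finset.univ.filter fun v => height v = 0).filter fun v => G.edist v₀ v < g).card : ℝ) ≤
      1 + 4 * d * √(2 * d - 1) ^ g := by
  have hd' : (2 : ℝ) ≤ d := by exact_mod_cast hd
  have hbound := (hG.hasNonbacktrackingGrowth hd).card_ball_le
    (S := Finset.univ.filter fun v => height v = 0) (Real.le_sqrt_of_sq_le (by nlinarith))
    (fun u v hv huv => ?_)
    (hG.sum_stepWeight_start_le hd hv₀) g
  · exact hbound.trans_eq (by ring)
  · rw [Finset.mem_filter] at hv
    rw [stepWeight_of_descent ((hG.height_eq u v huv).resolve_left (by omega)), hv.2, pow_zero]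

end IsLayered

end Layered

section Completion

open SimpleGraph

variable {U : Type*}

lemma ncard_neighborSet_sup_edge [Finite U] {G : SimpleGraph U} {a b : U} (hne : a ≠ b)
    (hab : ¬ G.Adj a b) (v : U) :
    ((G ⊔ edge a b).neighborSet v).ncard =
      (G.neighborSet v).ncard + if v = a ∨ v = b then 1 else 0 := by
  rw [neighborSet_sup]
  split_ifs with h
  · have hedge : (edge a b).neighborSet v = {if v = a then b else a} := by
      ext w
      simp only [mem_neighborSet, edge_adj, Set.mem_singleton_iff]
      grind
    rw [hedge, Set.union_singleton, Set.ncard_insert_of_notMem]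
    rw [mem_neighborSet]
    grind [G.adj_symm]
  · have hedge : (edge a b).neighborSet v = ∅ := by
      ext w
      simp only [mem_neighborSet, edge_adj, Set.mem_empty_iff_false]
      grind
    rw [hedge, Set.union_empty, add_zero]

lemma ncard_neighborSet_sdiff_edge_add [Finite U] {G : SimpleGraph U} {a b : U} (hab : G.Adj a b)
    (v : U) :
    ((G \ edge a b).neighborSet v).ncard + (if v = a ∨ v = b then 1 else 0) =
      (G.neighborSet v).ncard := by
  rw [← ncard_neighborSet_sup_edge hab.ne (by simp [edge_adj, hab.ne]), sdiff_sup_cancel]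
  rwa [edge_le_iff, or_iff_right hab.ne]

lemma isBipartiteWith_sup_edge {G : SimpleGraph U} {A B : Set U} (hG : G.IsBipartiteWith A B)
    {a b : U} (ha : a ∈ A) (hb : b ∈ B) : (G ⊔ edge a b).IsBipartiteWith A B := by
  refine ⟨hG.disjoint, fun u v huv => ?_⟩
  rw [sup_adj, edge_adj] at huv
  rcases huv with huv | ⟨⟨rfl, rfl⟩ | ⟨rfl, rfl⟩, -⟩
  exacts [hG.mem_of_adj huv, Or.inl ⟨ha, hb⟩, Or.inr ⟨hb, ha⟩]

lemma not_adj_of_le_edist {G : SimpleGraph U} {g : ℕ∞} (hg : 2 ≤ g) {a b : U}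
    (hab : g ≤ G.edist a b) : ¬ G.Adj a b := fun h => by
  rw [edist_eq_one_iff_adj.2 h] at hab
  exact absurd (hg.trans hab) (by norm_num)

lemma ncard_neighborSet_switch [Finite U] {G : SimpleGraph U} {z q a b : U} (hzq : G.Adj z q)
    (haq : ¬ G.Adj a q) (hzb : ¬ G.Adj z b) (haq' : a ≠ q) (hzb' : z ≠ b) (hab : a ≠ b) (v : U) :
    ((G \ edge z q ⊔ edge a q ⊔ edge z b).neighborSet v).ncard =
      (G.neighborSet v).ncard + if v = a ∨ v = b then 1 else 0 := by
  have hzq' := hzq.ne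
  have haz : a ≠ z := fun h => haq (h ▸ hzq)
  have hbq : b ≠ q := fun h => hzb (h ▸ hzq)
  have hzb'' : ¬ (G \ edge z q ⊔ edge a q).Adj z b := by
    simp only [sup_adj, sdiff_adj, edge_adj]
    grind
  have haq'' : ¬ (G \ edge z q).Adj a q := fun h => haq h.1
  have hdel := ncard_neighborSet_sdiff_edge_add hzq v
  rw [ncard_neighborSet_sup_edge hzb' hzb'', ncard_neighborSet_sup_edge haq' haq'']
  grind

/-- The graphs of edges between `A` and `B` that can be added to `F` without creating a cycle of
length less than `g`, where a vertex `v` gets at most `r v` new edges. -/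
structure IsPartialCompletion (F : SimpleGraph U) (A B : Set U) (r : U → ℕ) (g : ℕ∞)
    (D : SimpleGraph U) : Prop where
  isBipartiteWith : D.IsBipartiteWith A B
  disjoint : Disjoint F D
  ncard_le : ∀ v, (D.neighborSet v).ncard ≤ r v
  le_egirth : g ≤ (F ⊔ D).egirth

namespace IsPartialCompletion

variable [Finite U] {F D : SimpleGraph U} {A B : Set U} {r : U → ℕ} {g : ℕ∞}

lemma insert (hD : IsPartialCompletion F A B r g D) (hg : 2 ≤ g) {a b : U} (ha : a ∈ A)
    (hb : b ∈ B) (har : (D.neighborSet a).ncard < r a) (hbr : (D.neighborSet b).ncard < r b)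
    (hab : g ≤ (F ⊔ D).edist a b) :
    IsPartialCompletion F A B r g (D ⊔ edge a b) := by
  have hne : a ≠ b := hD.isBipartiteWith.disjoint.ne_of_mem ha hb
  have hnadj := not_adj_of_le_edist hg hab
  rw [sup_adj, not_or] at hnadj
  refine ⟨isBipartiteWith_sup_edge hD.isBipartiteWith ha hb, ?_, fun v => ?_, ?_⟩
  · exact disjoint_sup_right.2 ⟨hD.disjoint, (disjoint_edge F).2 hnadj.1⟩
  · have := hD.ncard_le v
    rw [ncard_neighborSet_sup_edge hne hnadj.2]
    grind
  · rw [← sup_assoc]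
    exact (le_min hD.le_egirth (hab.trans le_self_add)).trans (min_egirth_le_egirth_sup_edge a b)

lemma switch (hD : IsPartialCompletion F A B r g D) (hg : 3 ≤ g) {a b z q : U} (ha : a ∈ A)
    (hb : b ∈ B) (hz : z ∈ A) (hzq : D.Adj z q) (har : (D.neighborSet a).ncard < r a)
    (hbr : (D.neighborSet b).ncard < r b) (hza : g ≤ (F ⊔ D).edist z a)
    (hzb : g ≤ (F ⊔ D).edist z b) :
    IsPartialCompletion F A B r g (D \ edge z q ⊔ edge a q ⊔ edge z b) ∧
      ∀ v, ((D \ edge z q ⊔ edge a q ⊔ edge z b).neighborSet v).ncard =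
        (D.neighborSet v).ncard + if v = a ∨ v = b then 1 else 0 := by
  have hAB := hD.isBipartiteWith.disjoint
  have hq : q ∈ B := hD.isBipartiteWith.mem_of_mem_adj hz hzq
  have hnzb := not_adj_of_le_edist ((by norm_num : (2 : ℕ∞) ≤ 3).trans hg) hzb
  have hnaq : ¬ (F ⊔ D).Adj a q := fun haq => by
    have hle := hza.trans (edist_le_edist_add_one z haq.symm)
    rw [edist_eq_one_iff_adj.2 (Or.inr hzq)] at hle
    exact absurd (hg.trans hle) (by norm_num)
  rw [sup_adj, not_or] at hnzb hnaq
  have hdeg := ncard_neighborSet_switch hzq hnaq.2 hnzb.2 (hAB.ne_of_mem ha hq)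
    (hAB.ne_of_mem hz hb) (hAB.ne_of_mem ha hb)
  refine ⟨⟨?_, ?_, fun v => ?_, ?_⟩, hdeg⟩
  · refine isBipartiteWith_sup_edge (isBipartiteWith_sup_edge ⟨hAB, fun u v huv => ?_⟩ ha hq) hz hb
    exact hD.isBipartiteWith.mem_of_adj huv.1
  · simp only [disjoint_sup_right, disjoint_edge]
    exact ⟨⟨hD.disjoint.mono_right sdiff_le, hnaq.1⟩, hnzb.1⟩
  · have := hD.ncard_le v
    rw [hdeg]
    grind
  · have hFzq : ¬ F.Adj z q := fun h => (disjoint_left.1 hD.disjoint) z q h hzq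
    have := le_egirth_switch hD.le_egirth (Or.inr hzq) hza hzb
    rwa [sup_sdiff, sdiff_edge F hFzq, sup_assoc, sup_assoc,
      ← sup_assoc (D \ _)] at this

lemma exists_augmentation (hD : IsPartialCompletion F A B r g D) (hg : 3 ≤ g) {a b z : U}
    (ha : a ∈ A) (hb : b ∈ B) (hz : z ∈ A) (har : (D.neighborSet a).ncard < r a)
    (hbr : (D.neighborSet b).ncard < r b) (hzr : 0 < r z) (hza : g ≤ (F ⊔ D).edist z a)
    (hzb : g ≤ (F ⊔ D).edist z b) :
    ∃ D', IsPartialCompletion F A B r g D' ∧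
      (∀ v, (D.neighborSet v).ncard ≤ (D'.neighborSet v).ncard) ∧
      ∃ v ∈ A, (D.neighborSet v).ncard < (D'.neighborSet v).ncard := by
  have htwo : 2 ≤ g := (by norm_num : (2 : ℕ∞) ≤ 3).trans hg
  rcases (hD.ncard_le z).lt_or_eq with hlt | heq
  · have hdeg := ncard_neighborSet_sup_edge (hD.isBipartiteWith.disjoint.ne_of_mem hz hb)
      fun h => not_adj_of_le_edist htwo hzb (Or.inr h)
    exact ⟨_, hD.insert htwo hz hb hlt hbr hzb, fun v => (hdeg v).ge.trans' le_self_add, z, hz,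
      by rw [hdeg, if_pos (Or.inl rfl)]; exact Nat.lt_succ_self _⟩
  · obtain ⟨q, hzq⟩ := Set.nonempty_of_ncard_ne_zero (heq.trans_ne hzr.ne')
    obtain ⟨hD', hdeg⟩ := hD.switch hg ha hb hz hzq har hbr hza hzb
    exact ⟨_, hD', fun v => (hdeg v).ge.trans' le_self_add, a, ha,
      by rw [hdeg, if_pos (Or.inl rfl)]; exact Nat.lt_succ_self _⟩

end IsPartialCompletion

lemma sum_ncard_neighborSet_eq [Finite U] {D : SimpleGraph U} {A B : Finset U}
    (hD : D.IsBipartiteWith A B) :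
    ∑ v ∈ A, (D.neighborSet v).ncard = ∑ v ∈ B, (D.neighborSet v).ncard := by
  have := Fintype.ofFinite U
  have hdeg : ∀ v, (D.neighborSet v).ncard = D.degree v := fun v => by
    rw [Set.ncard_eq_toFinset_card', Set.toFinset_card, card_neighborSet_eq_degree]
  simpa only [hdeg] using isBipartiteWith_sum_degrees_eq hD

lemma exists_deficient [Finite U] {D : SimpleGraph U} {A B : Finset U} {r : U → ℕ}
    (hD : D.IsBipartiteWith A B) (hle : ∀ v, (D.neighborSet v).ncard ≤ r v)
    (hr : ∑ v ∈ A, r v = ∑ v ∈ B, r v) {v : U} (hv : v ∈ A ∨ v ∈ B)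
    (hne : (D.neighborSet v).ncard ≠ r v) :
    ∃ a ∈ A, ∃ b ∈ B, (D.neighborSet a).ncard < r a ∧ (D.neighborSet b).ncard < r b := by
  have hsum := sum_ncard_neighborSet_eq hD
  have hlt := (hle v).lt_of_ne hne
  rcases hv with hv | hv
  · have hA := Finset.sum_lt_sum (fun v _ => hle v) ⟨v, hv, hlt⟩
    obtain ⟨b, hb, hbr⟩ := Finset.exists_lt_of_sum_lt ((hsum ▸ hA).trans_eq hr)
    exact ⟨v, hv, b, hb, hlt, hbr⟩
  · have hB := Finset.sum_lt_sum (fun v _ => hle v) ⟨v, hv, hlt⟩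
    obtain ⟨a, ha, har⟩ := Finset.exists_lt_of_sum_lt ((hsum ▸ hB).trans_eq hr.symm)
    exact ⟨a, ha, v, hv, har, hlt⟩

/-- A partial completion with the largest number of edges is complete: near a pair of deficient
vertices it could be enlarged by an insertion or a switch. -/
theorem exists_completion [Finite U] {F : SimpleGraph U} {A B : Finset U} {r : U → ℕ} {g : ℕ∞}
    (hg : 3 ≤ g) (hAB : Disjoint A B) (hr : ∑ v ∈ A, r v = ∑ v ∈ B, r v) (hF : g ≤ F.egirth)
    (hfar : ∀ D, IsPartialCompletion F A B r g D → ∀ a ∈ A, ∀ b ∈ B,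
      ∃ z ∈ A, 0 < r z ∧ g ≤ (F ⊔ D).edist z a ∧ g ≤ (F ⊔ D).edist z b) :
    ∃ D, IsPartialCompletion F A B r g D ∧ ∀ v, v ∈ A ∨ v ∈ B → (D.neighborSet v).ncard = r v := by
  have hbot : IsPartialCompletion F A B r g ⊥ :=
    ⟨⟨Finset.disjoint_coe.2 hAB, fun _ _ h => h.elim⟩, disjoint_bot_right, fun v => by simp,
      by rwa [sup_bot_eq]⟩
  obtain ⟨D, hD, hmax⟩ := (Set.toFinite {D | IsPartialCompletion F A B r g D}).exists_maximalFor
    (fun D => ∑ v ∈ A, (D.neighborSet v).ncard) _ ⟨⊥, hbot⟩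
  refine ⟨D, hD, fun v hv => by_contra fun hne => ?_⟩
  obtain ⟨a, ha, b, hb, har, hbr⟩ := exists_deficient hD.isBipartiteWith hD.ncard_le hr hv hne
  obtain ⟨z, hz, hrz, hza, hzb⟩ := hfar D hD a ha b hb
  obtain ⟨D', hD', hle, hlt⟩ := hD.exists_augmentation hg ha hb hz har hbr hrz hza hzb
  have hsum := Finset.sum_lt_sum (fun v _ => hle v) hlt
  exact hsum.not_ge (hmax hD' hsum.le)

end Completion

section RegularExtension

open SimpleGraph

variable {W : Type*} {F D : SimpleGraph W}

lemma ncard_neighborSet_sup_of_disjoint [Finite W] (h : Disjoint F D) (v : W) :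
    ((F ⊔ D).neighborSet v).ncard = (F.neighborSet v).ncard + (D.neighborSet v).ncard := by
  rw [neighborSet_sup, Set.ncard_union_eq]
  exact Set.disjoint_left.2 fun w hF hD => disjoint_left.1 h v w hF hD

lemma neighborSet_eq_of_le_of_ncard_le [Finite W] (h : F ≤ D) {v : W}
    (hv : (D.neighborSet v).ncard ≤ (F.neighborSet v).ncard) : F.neighborSet v = D.neighborSet v :=
  Set.eq_of_subset_of_ncard_le (fun _ hw => h hw) hv

variable [Fintype W]

lemma sum_sub_ncard_neighborSet_eq {A : Finset W} {k : ℕ} (hF : F.IsBipartiteWith A (Aᶜ : Finset W))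
    (hA : A.card = Aᶜ.card) (hdeg : ∀ v, (F.neighborSet v).ncard ≤ k) :
    ∑ v ∈ A, (k - (F.neighborSet v).ncard) = ∑ v ∈ Aᶜ, (k - (F.neighborSet v).ncard) := by
  rw [Finset.sum_tsub_distrib _ fun v _ => hdeg v, Finset.sum_tsub_distrib _ fun v _ => hdeg v,
    sum_ncard_neighborSet_eq hF, Finset.sum_const, Finset.sum_const, hA]

theorem exists_regular_extension {A : Finset W} {k g : ℕ} (hk : 2 ≤ k) (hg : 3 ≤ g)
    (hF : F.IsBipartiteWith A (Aᶜ : Finset W)) (hA : A.card = Aᶜ.card)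
    (hdeg : ∀ v, (F.neighborSet v).ncard ≤ k + 1) (hgirth : (g : ℕ∞) ≤ F.egirth)
    (hfree : 2 * (1 + 2 * (k + 1) * k ^ g) < (A.filter fun v => F.neighborSet v = ∅).card) :
    ∃ G, F ≤ G ∧ IsRegular G (k + 1) ∧ (g : ℕ∞) ≤ G.egirth := by
  set r : W → ℕ := fun v => k + 1 - (F.neighborSet v).ncard
  have hfar : ∀ D, IsPartialCompletion F A (Aᶜ : Finset W) r g D → ∀ a ∈ A, ∀ b ∈ Aᶜ,
      ∃ z ∈ A, 0 < r z ∧ (g : ℕ∞) ≤ (F ⊔ D).edist z a ∧ (g : ℕ∞) ≤ (F ⊔ D).edist z b := by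
    intro D hD a _ b _
    have hdeg' : ∀ v, ((F ⊔ D).neighborSet v).ncard ≤ k + 1 := fun v => by
      rw [ncard_neighborSet_sup_of_disjoint hD.disjoint]
      exact (Nat.add_le_add_left (hD.ncard_le v) _).trans_eq (add_tsub_cancel_of_le (hdeg v))
    obtain ⟨z, hz, hza, hzb⟩ := exists_le_edist_of_card_ball_le
      (card_ball_le_of_ncard_le hk hdeg' _ a g) (card_ball_le_of_ncard_le hk hdeg' _ b g)
      (by exact_mod_cast hfree)
    rw [Finset.mem_filter] at hz
    exact ⟨z, hz.1, by simp [r, hz.2], hza, hzb⟩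
  obtain ⟨D, hD, hfull⟩ := exists_completion (by exact_mod_cast hg) disjoint_compl_right
    (sum_sub_ncard_neighborSet_eq hF hA hdeg) hgirth hfar
  refine ⟨F ⊔ D, le_sup_left, fun v => ?_, hD.le_egirth⟩
  rw [ncard_neighborSet_sup_of_disjoint hD.disjoint, hfull v (by simpa using Classical.em _),
    add_tsub_cancel_of_le (hdeg v)]

end RegularExtension

section TwinTree

open SimpleGraph

variable {d k : ℕ}

/-- The nodes of two rooted `d`-ary trees, of height `k + 1` on the side `false` and of height `k`
on the side `true`. A node is given by its side and by the list of choices leading to it from the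
root, the latest choice first. -/
abbrev TwinNode (d k : ℕ) : Type :=
  {v : Bool × List (Fin d) // v.2.length + v.1.toNat ≤ k + 1}

/-- The vertices of the twin tree: the nodes, and an apex `none` above the two roots. -/
abbrev TwinVertex (d k : ℕ) : Type :=
  Option (TwinNode d k)

/-- The level of a vertex of the twin tree, counted from the leaves on the side `false`. -/
def twinHeight : TwinVertex d k → ℕ
  | none => k + 2
  | some v => k + 1 - v.1.2.length

namespace TwinNode

lemma length_add_height (v : TwinNode d k) : v.1.2.length + twinHeight (some v) = k + 1 :=
  Nat.add_sub_cancel' (le_of_add_le_left v.2)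

/-- A node as an element of a finite type of words. -/
def toWord (v : TwinNode d k) : Bool × Σ n : Fin (k + 2), List.Vector (Fin d) n :=
  (v.1.1, ⟨⟨v.1.2.length, Nat.lt_succ_of_le (le_of_add_le_left v.2)⟩, v.1.2, rfl⟩)

lemma toWord_injective : Function.Injective (toWord : TwinNode d k → _) :=
  fun _ _ h => Subtype.ext <|
    congrArg (fun w : Bool × Σ n : Fin (k + 2), List.Vector (Fin d) n => (w.1, w.2.2.val)) h

instance : Fintype (TwinNode d k) := Fintype.ofInjective toWord toWord_injective

/-- The vertex below which a node hangs. -/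
def parent : TwinNode d k → TwinVertex d k
  | ⟨(_, []), _⟩ => none
  | ⟨(b, _ :: l), h⟩ => some ⟨(b, l), by simp only [List.length_cons] at h ⊢; omega⟩

lemma parent_eq_none_iff {v : TwinNode d k} : v.parent = none ↔ v.1.2 = [] := by
  obtain ⟨⟨b, _ | ⟨i, l⟩⟩, h⟩ := v <;> simp [parent]

lemma parent_eq_some_iff {v w : TwinNode d k} :
    v.parent = some w ↔ ∃ i, v.1 = (w.1.1, i :: w.1.2) := by
  obtain ⟨⟨b, _ | ⟨i, l⟩⟩, h⟩ := v <;> simp [parent, Subtype.ext_iff, Prod.ext_iff]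

lemma height_parent (v : TwinNode d k) : twinHeight v.parent = twinHeight (some v) + 1 := by
  obtain ⟨⟨b, _ | ⟨i, l⟩⟩, h⟩ := v
  · rfl
  · simp only [parent, twinHeight, List.length_cons] at h ⊢
    omega

/-- The nodes below which no other node hangs. -/
def IsLeaf (v : TwinNode d k) : Prop := v.1.2.length + v.1.1.toNat = k + 1

lemma IsLeaf.height_eq {v : TwinNode d k} (hv : v.IsLeaf) :
    twinHeight (some v) = v.1.1.toNat := by
  have := v.length_add_height
  unfold IsLeaf at hv
  omega

lemma height_pos {v : TwinNode d k} (hv : ¬ v.IsLeaf) : 0 < twinHeight (some v) := by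
  have := v.length_add_height
  have := v.2
  unfold IsLeaf at hv
  omega

/-- The nodes hanging below a vertex. -/
def children (u : TwinVertex d k) : Finset (TwinNode d k) :=
  Finset.univ.filter fun v => v.parent = u

lemma mem_children {u : TwinVertex d k} {v : TwinNode d k} : v ∈ children u ↔ v.parent = u := by
  simp [children]

lemma card_children_of_not_isLeaf {v : TwinNode d k} (hv : ¬ v.IsLeaf) :
    (children (some v)).card = d := by
  have hlen : v.1.2.length + 1 + v.1.1.toNat ≤ k + 1 := by
    have := v.2
    unfold IsLeaf at hv
    omega
  have himage : children (some v) = Finset.univ.image fun i : Fin d =>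
      (⟨(v.1.1, i :: v.1.2), hlen⟩ : TwinNode d k) := by
    ext w
    simp [mem_children, parent_eq_some_iff, Subtype.ext_iff, eq_comm]
  rw [himage, Finset.card_image_of_injective _ fun i j hij => by simpa using hij, Finset.card_fin]

lemma children_of_isLeaf {v : TwinNode d k} (hv : v.IsLeaf) : children (some v) = ∅ := by
  refine Finset.eq_empty_of_forall_notMem fun w hw => ?_
  obtain ⟨i, hi⟩ := parent_eq_some_iff.1 (mem_children.1 hw)
  have := w.2
  unfold IsLeaf at hv
  simp only [hi, List.length_cons] at this
  omega

/-- The root on a given side. -/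
def root (b : Bool) : TwinNode d k := ⟨(b, []), by cases b <;> simp⟩

lemma children_none : children (none : TwinVertex d k) = {root false, root true} := by
  ext ⟨⟨b, l⟩, h⟩
  cases b <;> simp [mem_children, parent_eq_none_iff, root, Subtype.ext_iff]

/-- The leaves on a given side, as vertices of the twin tree. -/
def leaves (b : Bool) : Finset (TwinVertex d k) :=
  (Finset.univ.filter fun v : TwinNode d k => v.IsLeaf ∧ v.1.1 = b).map Function.Embedding.some

lemma mem_leaves {b : Bool} {u : TwinVertex d k} :
    u ∈ leaves b ↔ ∃ v : TwinNode d k, v.IsLeaf ∧ v.1.1 = b ∧ some v = u := by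
  simp [leaves, and_assoc]

lemma some_mem_leaves {b : Bool} {v : TwinNode d k} :
    some v ∈ leaves b ↔ v.IsLeaf ∧ v.1.1 = b := by
  simp [leaves]

lemma height_of_mem_leaves {b : Bool} {u : TwinVertex d k} (hu : u ∈ leaves b) :
    twinHeight u = b.toNat := by
  obtain ⟨v, hv, rfl, rfl⟩ := mem_leaves.1 hu
  exact hv.height_eq

lemma mem_leaves_false_iff {u : TwinVertex d k} : u ∈ leaves false ↔ twinHeight u = 0 := by
  refine ⟨height_of_mem_leaves, fun hu => ?_⟩
  rcases u with _ | v
  · simp [twinHeight] at hu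
  · have hv : v.IsLeaf := by_contra fun hv => (height_pos hv).ne' hu
    refine some_mem_leaves.2 ⟨hv, ?_⟩
    rwa [hv.height_eq, Bool.toNat_eq_zero] at hu

lemma disjoint_leaves : Disjoint (leaves false : Finset (TwinVertex d k)) (leaves true) :=
  Finset.disjoint_left.2 fun _ h h' =>
    zero_ne_one ((height_of_mem_leaves h).symm.trans (height_of_mem_leaves h'))

lemma card_leaves (b : Bool) :
    (leaves b : Finset (TwinVertex d k)).card = d ^ (k + 1 - b.toNat) := by
  have hlen : k + 1 - b.toNat + b.toNat = k + 1 := Nat.sub_add_cancel (by have := b.toNat_le; omega)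
  have hvector : (Finset.univ : Finset (List.Vector (Fin d) (k + 1 - b.toNat))).card =
      d ^ (k + 1 - b.toNat) := by
    rw [Finset.card_univ, card_vector, Fintype.card_fin]
  have hleaf (l : List.Vector (Fin d) (k + 1 - b.toNat)) : l.toList.length + b.toNat = k + 1 := by
    rw [l.toList_length, hlen]
  rw [leaves, Finset.card_map, ← hvector]
  refine (Finset.card_bij (fun l _ => ⟨(b, l.toList), (hleaf l).le⟩) (fun l _ => ?_)
    (fun l _ l' _ hll' => ?_) fun v hv => ?_).symm
  · exact Finset.mem_filter.2 ⟨Finset.mem_univ _, hleaf l, rfl⟩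
  · exact Subtype.ext (congrArg (fun v : TwinNode d k => v.1.2) hll')
  · obtain ⟨hv', rfl⟩ := (Finset.mem_filter.1 hv).2
    exact ⟨⟨v.1.2, Nat.eq_sub_of_add_eq hv'⟩, Finset.mem_univ _, rfl⟩

lemma card_add_two_le (hd : 2 ≤ d) : Fintype.card (TwinNode d k) + 2 ≤ 2 * d ^ (k + 2) := by
  have hcard := Fintype.card_le_of_injective _ (toWord_injective (d := d) (k := k))
  rw [Fintype.card_prod, Fintype.card_bool, Fintype.card_sigma] at hcard
  simp only [card_vector, Fintype.card_fin, Fin.sum_univ_eq_sum_range (fun n => d ^ n)] at hcard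
  have := Nat.geomSum_lt hd (s := Finset.range (k + 2)) fun n => Finset.mem_range.1
  omega

end TwinNode

end TwinTree

section TwinTreeGraph

open SimpleGraph TwinNode

variable {d k : ℕ}

/-- The tree formed by the two `d`-ary trees and the apex. -/
def twinTree (d k : ℕ) : SimpleGraph (TwinVertex d k) :=
  fromRel fun u w => ∃ v : TwinNode d k, some v = u ∧ v.parent = w

namespace twinTree

lemma adj_iff {u w : TwinVertex d k} : (twinTree d k).Adj u w ↔
    (∃ v : TwinNode d k, some v = u ∧ v.parent = w) ∨
      ∃ v : TwinNode d k, some v = w ∧ v.parent = u := by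
  refine ⟨fun h => h.2, fun h => ⟨?_, h⟩⟩
  rintro rfl
  obtain ⟨v, rfl, hv⟩ | ⟨v, rfl, hv⟩ := h <;>
  · have := v.height_parent
    rw [hv] at this
    omega

lemma height_eq {u w : TwinVertex d k} (h : (twinTree d k).Adj u w) :
    twinHeight w = twinHeight u + 1 ∨ twinHeight u = twinHeight w + 1 := by
  obtain ⟨v, rfl, rfl⟩ | ⟨v, rfl, rfl⟩ := adj_iff.1 h
  · exact Or.inl v.height_parent
  · exact Or.inr v.height_parent

lemma exists_parent_eq_of_lt {u w : TwinVertex d k} (h : (twinTree d k).Adj u w)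
    (hlt : twinHeight u < twinHeight w) : ∃ v : TwinNode d k, some v = u ∧ v.parent = w := by
  refine (adj_iff.1 h).resolve_right ?_
  rintro ⟨v, rfl, rfl⟩
  have := v.height_parent
  omega

lemma eq_of_lt {u v w : TwinVertex d k} (huv : (twinTree d k).Adj u v)
    (huw : (twinTree d k).Adj u w) (hv : twinHeight u < twinHeight v)
    (hw : twinHeight u < twinHeight w) : v = w := by
  obtain ⟨x, rfl, rfl⟩ := exists_parent_eq_of_lt huv hv
  obtain ⟨y, hxy, rfl⟩ := exists_parent_eq_of_lt huw hw
  rw [Option.some_injective _ hxy]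

lemma egirth_eq_top : (twinTree d k).egirth = ⊤ := by
  rw [SimpleGraph.egirth_eq_top]
  refine isAcyclic_of_forall_adj_ne (height := twinHeight) (fun u v h => ?_)
    fun u v w => eq_of_lt
  have := height_eq h
  omega

lemma filter_adj_none : Finset.univ.filter ((twinTree d k).Adj none) =
    (children none).map Function.Embedding.some := by
  ext w
  simp only [Finset.mem_filter, Finset.mem_univ, true_and, Finset.mem_map, mem_children, adj_iff,
    reduceCtorEq, false_and, exists_false, false_or, Function.Embedding.some_apply]
  exact exists_congr fun _ => and_comm

lemma filter_adj_some (v : TwinNode d k) : Finset.univ.filter ((twinTree d k).Adj (some v)) =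
    insert v.parent ((children (some v)).map Function.Embedding.some) := by
  ext w
  simp only [Finset.mem_filter, Finset.mem_univ, true_and, Finset.mem_insert, Finset.mem_map,
    mem_children, adj_iff, Option.some.injEq, exists_eq_left, Function.Embedding.some_apply]
  exact or_congr eq_comm (exists_congr fun _ => and_comm)

variable {M : Type*} [AddCommMonoid M] (y : TwinVertex d k → M)

lemma sum_adj_none : ∑ w with (twinTree d k).Adj none w, y w =
    y (some (root false)) + y (some (root true)) := by
  rw [filter_adj_none, children_none, Finset.sum_map, Finset.sum_pair (by simp [root])]
  rfl

lemma sum_adj_some (v : TwinNode d k) : ∑ w with (twinTree d k).Adj (some v) w, y w =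
    y v.parent + ∑ w ∈ children (some v), y (some w) := by
  rw [filter_adj_some, Finset.sum_insert, Finset.sum_map]
  · rfl
  · intro hmem
    obtain ⟨w, hw, hwv⟩ := Finset.mem_map.1 hmem
    have hv := v.height_parent
    have hheight := w.height_parent
    rw [← hwv] at hv
    rw [mem_children.1 hw] at hheight
    simp only [Function.Embedding.some_apply] at hv
    omega

lemma ncard_neighborSet_none : ((twinTree d k).neighborSet none).ncard = 2 := by
  rw [← card_filter_adj, Finset.card_eq_sum_ones, sum_adj_none]

lemma ncard_neighborSet_some (v : TwinNode d k) :
    ((twinTree d k).neighborSet (some v)).ncard = 1 + (children (some v)).card := by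
  rw [← card_filter_adj, Finset.card_eq_sum_ones, sum_adj_some, ← Finset.card_eq_sum_ones]

end twinTree

end TwinTreeGraph

section TwinTreeCompletion

open SimpleGraph TwinNode

variable {d k : ℕ}

/-- The number of edges that a leaf of the twin tree has to receive. -/
def leafQuota (v : TwinVertex d k) : ℕ := if twinHeight v = 0 then 1 else d

/-- The graphs joining leaves on the side `false` to leaves on the side `true` that can be added to
the twin tree without creating a cycle of length less than `g` and without exceeding `leafQuota`. -/
abbrev IsLeafJoin (g : ℕ∞) (D : SimpleGraph (TwinVertex d k)) : Prop :=
  IsPartialCompletion (twinTree d k) (leaves false : Finset (TwinVertex d k))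
    (leaves true : Finset (TwinVertex d k)) leafQuota g D

namespace IsLeafJoin

variable {D : SimpleGraph (TwinVertex d k)} {g : ℕ∞}

lemma height_of_adj (hD : IsLeafJoin g D) {u w : TwinVertex d k} (h : D.Adj u w) :
    twinHeight u = 0 ∧ twinHeight w = 1 ∨ twinHeight u = 1 ∧ twinHeight w = 0 :=
  (hD.isBipartiteWith.mem_of_adj h).imp
    (And.imp height_of_mem_leaves height_of_mem_leaves)
    (And.imp height_of_mem_leaves height_of_mem_leaves)

lemma mem_leaves_of_adj (hD : IsLeafJoin g D) {u w : TwinVertex d k} (h : D.Adj u w) :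
    ∃ b, u ∈ leaves b :=
  (hD.isBipartiteWith.mem_of_adj h).elim (fun h => ⟨false, h.1⟩) fun h => ⟨true, h.1⟩

lemma mem_leaves_not_of_adj (hD : IsLeafJoin g D) {b : Bool} {u w : TwinVertex d k}
    (hu : u ∈ leaves b) (h : D.Adj u w) : w ∈ leaves (!b) := by
  cases b
  · exact hD.isBipartiteWith.mem_of_mem_adj hu h
  · exact hD.isBipartiteWith.symm.mem_of_mem_adj hu h

lemma neighborSet_none (hD : IsLeafJoin g D) : D.neighborSet none = ∅ := by
  refine Set.eq_empty_of_forall_notMem fun w hw => ?_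
  obtain ⟨b, hb⟩ := hD.mem_leaves_of_adj hw
  obtain ⟨v, -, -, hv⟩ := mem_leaves.1 hb
  exact Option.some_ne_none v hv

lemma neighborSet_some (hD : IsLeafJoin g D) {v : TwinNode d k} (hv : ¬ v.IsLeaf) :
    D.neighborSet (some v) = ∅ := by
  refine Set.eq_empty_of_forall_notMem fun w hw => ?_
  obtain ⟨b, hb⟩ := hD.mem_leaves_of_adj hw
  exact hv (some_mem_leaves.1 hb).1

lemma adj_twinTree_of_lt (hD : IsLeafJoin g D) {u w : TwinVertex d k} (hu : 0 < twinHeight u)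
    (h : (twinTree d k ⊔ D).Adj u w) (hlt : twinHeight u < twinHeight w) :
    (twinTree d k).Adj u w := by
  refine h.resolve_right fun h => ?_
  have := hD.height_of_adj h
  omega

lemma ncard_neighborSet_of_not_isLeaf (hD : IsLeafJoin g D) {v : TwinNode d k}
    (hv : ¬ v.IsLeaf) : ((twinTree d k ⊔ D).neighborSet (some v)).ncard = d + 1 := by
  rw [ncard_neighborSet_sup_of_disjoint hD.disjoint, twinTree.ncard_neighborSet_some,
    card_children_of_not_isLeaf hv, hD.neighborSet_some hv, Set.ncard_empty, add_zero, add_comm]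

lemma ncard_neighborSet_of_isLeaf (hD : IsLeafJoin g D) {v : TwinNode d k} (hv : v.IsLeaf) :
    ((twinTree d k ⊔ D).neighborSet (some v)).ncard = 1 + (D.neighborSet (some v)).ncard := by
  rw [ncard_neighborSet_sup_of_disjoint hD.disjoint, twinTree.ncard_neighborSet_some,
    children_of_isLeaf hv, Finset.card_empty, add_zero]

lemma ncard_neighborSet_of_complete (hD : IsLeafJoin g D)
    (hcomplete : ∀ v : TwinNode d k, v.IsLeaf →
      (D.neighborSet (some v)).ncard = leafQuota (some v))
    {v : TwinNode d k} (hv : 0 < twinHeight (some v)) :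
    ((twinTree d k ⊔ D).neighborSet (some v)).ncard = d + 1 := by
  by_cases hleaf : v.IsLeaf
  · rw [hD.ncard_neighborSet_of_isLeaf hleaf, hcomplete v hleaf, leafQuota, if_neg hv.ne',
      add_comm]
  · exact hD.ncard_neighborSet_of_not_isLeaf hleaf

lemma isLayered (hD : IsLeafJoin g D) (hd : 1 ≤ d) :
    IsLayered (twinTree d k ⊔ D) d twinHeight where
  height_eq u w h := by
    rcases h with h | h
    · exact twinTree.height_eq h
    · have := hD.height_of_adj h
      omega
  eq_of_lt u v w hu huv huw hv hw :=
    twinTree.eq_of_lt (hD.adj_twinTree_of_lt hu huv hv) (hD.adj_twinTree_of_lt hu huw hw) hv hw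
  ncard_le u hu := by
    rcases u with _ | v
    · rw [ncard_neighborSet_sup_of_disjoint hD.disjoint, twinTree.ncard_neighborSet_none,
        hD.neighborSet_none, Set.ncard_empty]
      omega
    · by_cases hv : v.IsLeaf
      · have := hD.ncard_le (some v)
        rw [leafQuota, if_neg hu.ne'] at this
        rw [hD.ncard_neighborSet_of_isLeaf hv]
        omega
      · exact (hD.ncard_neighborSet_of_not_isLeaf hv).le
  ncard_le_two u hu := by
    obtain ⟨v, hv, -, rfl⟩ := mem_leaves.1 (mem_leaves_false_iff.2 hu)
    have := hD.ncard_le (some v)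
    rw [leafQuota, if_pos hu] at this
    rw [hD.ncard_neighborSet_of_isLeaf hv]
    omega

end IsLeafJoin

lemma leafQuota_of_mem_leaves_false {v : TwinVertex d k} (hv : v ∈ leaves false) :
    leafQuota v = 1 :=
  if_pos (height_of_mem_leaves hv)

lemma leafQuota_of_mem_leaves_true {v : TwinVertex d k} (hv : v ∈ leaves true) :
    leafQuota v = d :=
  if_neg ((height_of_mem_leaves hv).trans_ne one_ne_zero)

lemma sum_leafQuota_eq : ∑ v ∈ (leaves false : Finset (TwinVertex d k)), leafQuota v =
    ∑ v ∈ (leaves true : Finset (TwinVertex d k)), leafQuota v := by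
  rw [Finset.sum_const_nat fun v => leafQuota_of_mem_leaves_false,
    Finset.sum_const_nat fun v => leafQuota_of_mem_leaves_true, card_leaves, card_leaves, mul_one]
  exact pow_succ d k

lemma exists_isLeafJoin_complete {g : ℕ} (hd : 2 ≤ d) (hg : 3 ≤ g)
    (hbig : 2 * (1 + 4 * d * √(2 * d - 1) ^ g) < (d : ℝ) ^ (k + 1)) :
    ∃ D : SimpleGraph (TwinVertex d k), IsLeafJoin g D ∧
      ∀ v : TwinNode d k, v.IsLeaf → (D.neighborSet (some v)).ncard = leafQuota (some v) := by
  have hgirth : (g : ℕ∞) ≤ (twinTree d k).egirth := by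
    rw [twinTree.egirth_eq_top]
    exact le_top
  have hleaves : Finset.univ.filter (fun v : TwinVertex d k => twinHeight v = 0) =
      leaves false := by
    ext v
    simp [mem_leaves_false_iff]
  obtain ⟨D, hD, hcomplete⟩ := exists_completion (by exact_mod_cast hg) disjoint_leaves
    sum_leafQuota_eq hgirth fun D (hD : IsLeafJoin g D) a ha b hb => by
      have hball {v : TwinVertex d k} {b : Bool} (hv : v ∈ leaves b) :=
        (hD.isLayered (by omega)).card_ball_le hd
          ((height_of_mem_leaves hv).trans_le b.toNat_le) g
      rw [hleaves] at hball
      obtain ⟨z, hz, hza, hzb⟩ := exists_le_edist_of_card_ball_le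
        (hball ha) (hball hb) (by rw [card_leaves]; exact_mod_cast hbig)
      exact ⟨z, hz, by rw [leafQuota_of_mem_leaves_false hz]; exact one_pos, hza, hzb⟩
  refine ⟨D, hD, fun v hv => hcomplete _ ?_⟩
  cases hb : v.1.1
  · exact Or.inl (some_mem_leaves.2 ⟨hv, hb⟩)
  · exact Or.inr (some_mem_leaves.2 ⟨hv, hb⟩)

end TwinTreeCompletion

section RadialEigenvector

open SimpleGraph TwinNode

variable {d k : ℕ}

/-- The sequences `f` with `f 0 = f n = 0` that satisfy the eigenvalue equation of the `d`-ary tree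
for `μ`, the value at a vertex being given by its height. -/
structure IsRadialProfile (d n : ℕ) (μ : ℝ) (f : ℕ → ℝ) : Prop where
  zero : f 0 = 0
  last : f n = 0
  one_ne_zero : f 1 ≠ 0
  succ_succ : ∀ h, f (h + 2) + d * f h = μ * f (h + 1)

/-- The function on the twin tree that is `f` of the height on the side `false` and its negative on
the side `true`. -/
def radial (f : ℕ → ℝ) : TwinVertex d k → ℝ
  | none => 0
  | some v => (-1) ^ v.1.1.toNat * f (twinHeight (some v))

lemma radial_of_mem_leaves {f : ℕ → ℝ} {b : Bool} {u : TwinVertex d k} (hu : u ∈ leaves b) :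
    radial f u = (-1) ^ b.toNat * f b.toNat := by
  obtain ⟨v, hv, rfl, rfl⟩ := mem_leaves.1 hu
  rw [radial, hv.height_eq]

lemma radial_some_of_mem_children {f : ℕ → ℝ} {v w : TwinNode d k} (hw : w ∈ children (some v)) :
    radial f (some w) = (-1) ^ v.1.1.toNat * f (twinHeight (some v) - 1) := by
  obtain ⟨i, hi⟩ := parent_eq_some_iff.1 (mem_children.1 hw)
  have hheight := w.height_parent
  rw [mem_children.1 hw] at hheight
  rw [radial, hheight, Nat.add_sub_cancel, hi]

lemma adjMat_twinTree_mulVec_radial_none (f : ℕ → ℝ) :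
    (adjMat (twinTree d k)).mulVec (radial f) none = 0 := by
  rw [adjMat_mulVec_apply, twinTree.sum_adj_none]
  simp [radial, root, twinHeight]

namespace IsRadialProfile

variable {μ : ℝ} {f : ℕ → ℝ}

lemma radial_parent (hf : IsRadialProfile d (k + 2) μ f) (v : TwinNode d k) :
    radial f v.parent = (-1) ^ v.1.1.toNat * f (twinHeight (some v) + 1) := by
  rw [← v.height_parent]
  obtain ⟨⟨b, _ | ⟨i, l⟩⟩, h⟩ := v
  · simp [parent, radial, twinHeight, hf.last]
  · rfl

lemma radial_ne_zero (hf : IsRadialProfile d (k + 2) μ f) (hd : 0 < d) :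
    radial f ≠ (0 : TwinVertex d k → ℝ) := by
  have hcard : 0 < (leaves true : Finset (TwinVertex d k)).card := by
    rw [card_leaves]
    exact pow_pos hd _
  obtain ⟨u, hu⟩ := Finset.card_pos.1 hcard
  refine Function.ne_iff.2 ⟨u, ?_⟩
  simpa [radial_of_mem_leaves hu] using hf.one_ne_zero

lemma height_pos_of_radial_ne_zero (hf : IsRadialProfile d (k + 2) μ f) {v : TwinNode d k}
    (hv : radial f (some v) ≠ 0) : 0 < twinHeight (some v) := by
  refine Nat.pos_of_ne_zero fun h => hv ?_
  rw [radial, h, hf.zero, mul_zero]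

lemma adjMat_twinTree_mulVec_radial_some (hf : IsRadialProfile d (k + 2) μ f) (v : TwinNode d k) :
    (adjMat (twinTree d k)).mulVec (radial f) (some v) = (-1) ^ v.1.1.toNat *
      (f (twinHeight (some v) + 1) + (children (some v)).card * f (twinHeight (some v) - 1)) := by
  rw [adjMat_mulVec_apply, twinTree.sum_adj_some, hf.radial_parent,
    Finset.sum_congr rfl fun _ => radial_some_of_mem_children, Finset.sum_const, nsmul_eq_mul]
  ring

end IsRadialProfile

namespace IsLeafJoin

variable {D : SimpleGraph (TwinVertex d k)} {g : ℕ∞} {μ : ℝ} {f : ℕ → ℝ}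

lemma adjMat_mulVec_radial_of_mem_leaves (hD : IsLeafJoin g D) {b : Bool} {u : TwinVertex d k}
    (hu : u ∈ leaves b) : (adjMat D).mulVec (radial f) u =
      (D.neighborSet u).ncard * ((-1) ^ (!b).toNat * f (!b).toNat) := by
  have hneighbor : ∀ w ∈ Finset.univ.filter (D.Adj u), radial f w =
      (-1) ^ (!b).toNat * f (!b).toNat := fun w hw =>
    radial_of_mem_leaves (hD.mem_leaves_not_of_adj hu (Finset.mem_filter.1 hw).2)
  rw [adjMat_mulVec_apply, Finset.sum_congr rfl hneighbor, Finset.sum_const, nsmul_eq_mul,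
    card_filter_adj]

theorem adjMat_mulVec_radial (hD : IsLeafJoin g D)
    (hcomplete : ∀ v : TwinNode d k, v.IsLeaf →
      (D.neighborSet (some v)).ncard = leafQuota (some v))
    (hf : IsRadialProfile d (k + 2) μ f) :
    (adjMat (twinTree d k ⊔ D)).mulVec (radial f) = μ • radial f := by
  ext u
  rw [adjMat_sup_mulVec hD.disjoint, Pi.add_apply, Pi.smul_apply, smul_eq_mul]
  rcases u with _ | v
  · rw [adjMat_twinTree_mulVec_radial_none,
      adjMat_mulVec_of_neighborSet_eq_empty hD.neighborSet_none]
    simp [radial]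
  by_cases hv : v.IsLeaf
  · rw [hf.adjMat_twinTree_mulVec_radial_some, children_of_isLeaf hv,
      hD.adjMat_mulVec_radial_of_mem_leaves (some_mem_leaves.2 ⟨hv, rfl⟩), hcomplete v hv,
      leafQuota, radial, hv.height_eq]
    have := hf.succ_succ 0
    cases v.1.1
    · simp [hf.zero]
    · simpa [hf.zero] using this
  · obtain ⟨h, hh⟩ := Nat.exists_eq_add_of_lt (height_pos hv)
    rw [hf.adjMat_twinTree_mulVec_radial_some, card_children_of_not_isLeaf hv, radial,
      adjMat_mulVec_of_neighborSet_eq_empty (hD.neighborSet_some hv), hh, zero_add,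
      Nat.add_sub_cancel, hf.succ_succ]
    ring

end IsLeafJoin

end RadialEigenvector

section RadialSpectrum

/-- The eigenvalues of the `d`-ary tree of height `n - 2` with radial eigenvectors. -/
def radialSpectrum (d n : ℕ) : Finset ℝ :=
  (Finset.Ioo 0 n).image fun j : ℕ => 2 * √d * Real.cos (j * Real.pi / n)

variable {d n : ℕ}

lemma pos_of_mem_Ioo {j : ℕ} (hj : j ∈ Finset.Ioo 0 n) : (0 : ℝ) < n := by
  rw [Finset.mem_Ioo] at hj
  exact_mod_cast hj.1.trans hj.2

lemma angle_mem_Ioo {j : ℕ} (hj : j ∈ Finset.Ioo 0 n) :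
    j * Real.pi / n ∈ Set.Ioo 0 Real.pi := by
  obtain ⟨hj₀, hjn⟩ := Finset.mem_Ioo.1 hj
  have hj₀' : (0 : ℝ) < j := by exact_mod_cast hj₀
  have hjn' : (j : ℝ) < n := by exact_mod_cast hjn
  refine ⟨div_pos (mul_pos hj₀' Real.pi_pos) (pos_of_mem_Ioo hj),
    (div_lt_iff₀ (pos_of_mem_Ioo hj)).2 ?_⟩
  rw [mul_comm Real.pi]
  exact mul_lt_mul_of_pos_right hjn' Real.pi_pos

lemma card_radialSpectrum (hd : 0 < d) : (radialSpectrum d n).card = n - 1 := by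
  rw [radialSpectrum, Finset.card_image_of_injOn, Nat.card_Ioo, Nat.sub_zero]
  intro i hi j hj hij
  have hcos := mul_left_cancel₀ (by positivity) hij
  have hangle := Real.injOn_cos (Set.Ioo_subset_Icc_self (angle_mem_Ioo hi))
    (Set.Ioo_subset_Icc_self (angle_mem_Ioo hj)) hcos
  exact_mod_cast mul_right_cancel₀ Real.pi_ne_zero
    ((div_left_inj' (pos_of_mem_Ioo hi).ne').1 hangle)

lemma isRadialProfile_sin (hd : 0 < d) {j : ℕ} (hj : j ∈ Finset.Ioo 0 n) :
    IsRadialProfile d n (2 * √d * Real.cos (j * Real.pi / n))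
      fun h => √d ^ h * Real.sin (h * (j * Real.pi / n)) where
  zero := by simp
  last := by
    rw [mul_div_cancel₀ _ (pos_of_mem_Ioo hj).ne', Real.sin_nat_mul_pi, mul_zero]
  one_ne_zero := by
    have := Real.sin_pos_of_mem_Ioo (angle_mem_Ioo hj)
    rw [Nat.cast_one, one_mul, pow_one]
    positivity
  succ_succ h := by
    set θ := j * Real.pi / n
    have hsin : Real.sin ((h + 2 : ℕ) * θ) + Real.sin (h * θ) =
        2 * Real.cos θ * Real.sin ((h + 1 : ℕ) * θ) := by
      have h₂ : ((h + 2 : ℕ) : ℝ) * θ = (h + 1 : ℕ) * θ + θ := by push_cast; ring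
      have h₀ : (h : ℝ) * θ = (h + 1 : ℕ) * θ - θ := by push_cast; ring
      rw [h₂, h₀, Real.sin_add, Real.sin_sub]
      ring
    calc √d ^ (h + 2) * Real.sin ((h + 2 : ℕ) * θ) + d * (√d ^ h * Real.sin (h * θ))
        = √d ^ (h + 2) * (Real.sin ((h + 2 : ℕ) * θ) + Real.sin (h * θ)) := by
          rw [pow_add, Real.sq_sqrt d.cast_nonneg]
          ring
      _ = 2 * √d * Real.cos θ * (√d ^ (h + 1) * Real.sin ((h + 1 : ℕ) * θ)) := by
          rw [hsin]
          ring

lemma exists_isRadialProfile (hd : 0 < d) {μ : ℝ} (hμ : μ ∈ radialSpectrum d n) :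
    ∃ f, IsRadialProfile d n μ f := by
  obtain ⟨j, hj, rfl⟩ := Finset.mem_image.1 hμ
  exact ⟨_, isRadialProfile_sin hd hj⟩

end RadialSpectrum

section LocalizedGraph

open SimpleGraph

variable {U W : Type*} [Fintype U]

lemma card_le_card_filter_neighborSet_map_add (H : SimpleGraph U) (e : U ↪ W) (A : Finset W) :
    A.card ≤ (A.filter fun w => (H.map e).neighborSet w = ∅).card + Fintype.card U := by
  have hsub : (A.filter fun w => ¬ (H.map e).neighborSet w = ∅) ⊆ Finset.univ.map e := by
    intro w hw
    by_contra hrange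
    exact (Finset.mem_filter.1 hw).2 (neighborSet_map_of_notMem_range H (by simpa using hrange))
  rw [← Finset.card_filter_add_card_filter_not (s := A) fun w => (H.map e).neighborSet w = ∅,
    ← Finset.card_univ, ← Finset.card_map e]
  exact Nat.add_le_add_left (Finset.card_le_card hsub) _

variable [Fintype W]

lemma card_filter_snd_symm {n : ℕ} (φ : Fin n × Fin 2 ≃ W) (b : Fin 2) :
    (Finset.univ.filter fun w => (φ.symm w).2 = b).card = n := by
  calc _ = (Finset.univ : Finset (Fin n)).card :=
      Finset.card_nbij' (fun w => (φ.symm w).1) (fun i => φ (i, b)) (by simp) (by simp)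
        (fun w hw => by simp [← (Finset.mem_filter.1 hw).2]) fun i _ => by simp
    _ = n := Finset.card_fin n

lemma exists_regular_extension_of_isBipartite {H : SimpleGraph U} {n k g : ℕ}
    (hH : H.IsBipartite) (hk : 2 ≤ k) (hg : 3 ≤ g) (hdeg : ∀ u, (H.neighborSet u).ncard ≤ k + 1)
    (hgirth : (g : ℕ∞) ≤ H.egirth) (hW : Fintype.card W = n * 2)
    (hn : Fintype.card U + 2 * (1 + 2 * (k + 1) * k ^ g) < n) :
    ∃ (e : U ↪ W) (G : SimpleGraph W), H.map e ≤ G ∧ IsRegular G (k + 1) ∧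
      (g : ℕ∞) ≤ G.egirth := by
  obtain ⟨j⟩ : Nonempty (U ↪ Fin n) :=
    Function.Embedding.nonempty_of_card_le (by rw [Fintype.card_fin]; omega)
  obtain ⟨c⟩ := hH
  obtain ⟨φ⟩ : Nonempty (Fin n × Fin 2 ≃ W) := ⟨Fintype.equivOfCardEq (by simp [hW])⟩
  have hinj : Function.Injective fun u => φ (j u, c u) := fun u v h =>
    j.injective (congrArg Prod.fst (φ.injective h))
  set e : U ↪ W := ⟨fun u => φ (j u, c u), hinj⟩
  set A := Finset.univ.filter fun w => (φ.symm w).2 = 0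
  have hAc : Aᶜ = Finset.univ.filter fun w => (φ.symm w).2 = 1 := by
    ext w
    rw [Finset.mem_compl, Finset.mem_filter_univ, Finset.mem_filter_univ]
    omega
  have hA : A.card = n := card_filter_snd_symm φ 0
  have hbip : (H.map e).IsBipartiteWith A (Aᶜ : Finset W) := by
    refine ⟨Finset.disjoint_coe.2 disjoint_compl_right, fun w w' h => ?_⟩
    obtain ⟨u, v, huv, rfl, rfl⟩ := (map_adj e H w w').1 h
    have hc := c.valid huv
    have hside : ∀ x, (φ.symm (e x)).2 = c x := fun x => by simp [e]
    simp only [Finset.coe_compl, Set.mem_compl_iff, Finset.mem_coe, A, Finset.mem_filter_univ,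
      hside]
    omega
  have hdeg' : ∀ w, ((H.map e).neighborSet w).ncard ≤ k + 1 := by
    intro w
    by_cases hw : w ∈ Set.range e
    · obtain ⟨u, rfl⟩ := hw
      rw [neighborSet_map, Set.ncard_image_of_injective _ e.injective]
      exact hdeg u
    · simp [neighborSet_map_of_notMem_range H hw]
  have hfree := card_le_card_filter_neighborSet_map_add H e A
  exact ⟨e, exists_regular_extension hk hg hbip (by rw [hA, hAc, card_filter_snd_symm]) hdeg'
    (hgirth.trans (egirth_le_egirth_map H e)) (by omega)⟩

lemma hasLocalizedEigenvector_of_map_le {F : SimpleGraph U} {G : SimpleGraph W} {e : U ↪ W}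
    (hG : F.map e ≤ G) {y : U → ℝ} {μ ε : ℝ} (hμ : (adjMat F).mulVec y = μ • y) (hy : y ≠ 0)
    (hdeg : ∀ u, y u ≠ 0 → (G.neighborSet (e u)).ncard ≤ (F.neighborSet u).ncard) (hε : ε ≤ 1) :
    HasLocalizedEigenvector G μ (Fintype.card U) ε := by
  have hsupport : ∀ w ∉ Finset.univ.map e, Function.extend e y 0 w = 0 := fun w hw =>
    Function.extend_apply' _ _ _ fun ⟨u, hu⟩ =>
      hw (hu ▸ Finset.mem_map_of_mem e (Finset.mem_univ u))
  rw [← Finset.card_univ, ← Finset.card_map e]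
  refine hasLocalizedEigenvector_of_mulVec_eq ?_ (fun h => hy ?_) hsupport hε
  · rw [adjMat_mulVec_of_le hG, adjMat_map_mulVec_extend, hμ]
    · rw [← Function.extend_smul, smul_zero]
    intro w x hwx hwx'
    by_contra hx
    obtain ⟨u, rfl⟩ : x ∈ Set.range e := by
      by_contra hrange
      exact hx (Function.extend_apply' _ _ _ hrange)
    rw [e.injective.extend_apply] at hx
    have hneighbor := neighborSet_eq_of_le_of_ncard_le hG (v := e u) <| by
      rw [neighborSet_map, Set.ncard_image_of_injective _ e.injective]
      exact hdeg u hx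
    exact hwx' (hneighbor.ge hwx.symm).symm
  · ext u
    simpa [e.injective.extend_apply] using congrFun h (e u)

lemma IsLeafJoin.localizedSpectrum {d k r : ℕ} {g : ℕ∞} {ε : ℝ}
    {D : SimpleGraph (TwinVertex d k)} (hD : IsLeafJoin g D)
    (hcomplete : ∀ v : TwinNode d k, v.IsLeaf →
      (D.neighborSet (some v)).ncard = leafQuota (some v))
    {G : SimpleGraph W} {e : TwinVertex d k ↪ W} (hG : (twinTree d k ⊔ D).map e ≤ G)
    (hreg : IsRegular G (d + 1)) (hd : 2 ≤ d) (hr : r ≤ k + 1) (hε : ε ≤ 1) :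
    LocalizedSpectrum G r ε (2 * d ^ (k + 2)) := by
  have hcard : (Fintype.card (TwinVertex d k) : ℝ) ≤ 2 * d ^ (k + 2) := by
    have := TwinNode.card_add_two_le (k := k) hd
    rw [Fintype.card_option]
    exact_mod_cast show Fintype.card (TwinNode d k) + 1 ≤ 2 * d ^ (k + 2) by omega
  obtain ⟨Λ, hΛ, hΛr⟩ := Finset.exists_subset_card_eq
    (hr.trans_eq (card_radialSpectrum (n := k + 2) (by omega : 0 < d)).symm)
  refine ⟨Λ, hΛr, fun μ hμ => ⟨_, hcard, ?_⟩⟩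
  obtain ⟨f, hf⟩ := exists_isRadialProfile (by omega) (hΛ hμ)
  refine hasLocalizedEigenvector_of_map_le hG (hD.adjMat_mulVec_radial hcomplete hf)
    (hf.radial_ne_zero (by omega)) (fun u hu => ?_) hε
  rcases u with _ | v
  · exact (hu rfl).elim
  · rw [hreg, hD.ncard_neighborSet_of_complete hcomplete (hf.height_pos_of_radial_ne_zero hu)]

theorem exists_regular_localized {d k g n : ℕ} (hd : 2 ≤ d) (hg : 3 ≤ g)
    (hk : 2 * (1 + 4 * d * √(2 * d - 1) ^ g) < (d : ℝ) ^ (k + 1))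
    (hn : 2 * d ^ (k + 2) + 2 * (1 + 2 * (d + 1) * d ^ g) ≤ n) (hW : Fintype.card W = n * 2) :
    ∃ G : SimpleGraph W, IsRegular G (d + 1) ∧ (g : ℕ∞) ≤ G.egirth ∧
      ∀ r ≤ k + 1, ∀ ε ≤ 1, LocalizedSpectrum G r ε (2 * d ^ (k + 2)) := by
  obtain ⟨D, hD, hcomplete⟩ := exists_isLeafJoin_complete hd hg hk
  have hlayer := hD.isLayered (by omega)
  have hcard := TwinNode.card_add_two_le (k := k) hd
  obtain ⟨e, G, hG, hreg, hgirth⟩ := exists_regular_extension_of_isBipartite (W := W)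
    hlayer.isBipartite hd hg (hlayer.ncard_le_add_one (by omega)) hD.le_egirth hW
    (by rw [Fintype.card_option]; omega)
  exact ⟨G, hreg, hgirth, fun r hr ε hε => hD.localizedSpectrum hcomplete hG hreg hd hr hε⟩

end LocalizedGraph

section Parameters

open Filter

variable {d : ℕ} {α m : ℝ}

lemma LocalizedSpectrum.mono {W : Type*} [Fintype W] {G : SimpleGraph W} {r : ℕ} {ε b b' : ℝ}
    (h : LocalizedSpectrum G r ε b) (hb : b ≤ b') : LocalizedSpectrum G r ε b' := by
  obtain ⟨Λ, hΛ, hloc⟩ := h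
  exact ⟨Λ, hΛ, fun μ hμ => (hloc μ hμ).imp fun _ hk => ⟨hk.1.trans hb, hk.2⟩⟩

lemma pow_ceil_mul_logb_le {B : ℝ} (hB : 1 < B) (hα : 0 ≤ α) (hm : 1 ≤ m) :
    B ^ ⌈α * Real.logb B m⌉₊ ≤ B * m ^ α := by
  have hB0 : 0 < B := by linarith
  have hm0 : 0 < m := by linarith
  calc B ^ ⌈α * Real.logb B m⌉₊ = B ^ (⌈α * Real.logb B m⌉₊ : ℝ) := (Real.rpow_natCast _ _).symm
    _ ≤ B ^ (1 + α * Real.logb B m) := by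
      refine Real.rpow_le_rpow_of_exponent_le hB.le ?_
      rw [add_comm]
      exact (Nat.ceil_lt_add_one (mul_nonneg hα (Real.logb_nonneg hB hm))).le
    _ = B * m ^ α := by
      rw [Real.rpow_add hB0, Real.rpow_one, mul_comm α, Real.rpow_mul hB0.le,
        Real.rpow_logb hB0 hB.ne' hm0]

lemma sqrt_pow_ceil_two_mul_logb_le {B : ℝ} (hB : 1 < B) (hα : 0 ≤ α) (hm : 1 ≤ m) :
    √B ^ ⌈2 * α * Real.logb B m⌉₊ ≤ B * m ^ α := by
  refine le_of_sq_le_sq ?_ (by positivity)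
  calc (√B ^ ⌈2 * α * Real.logb B m⌉₊) ^ 2 = B ^ ⌈2 * α * Real.logb B m⌉₊ := by
        rw [← pow_mul, mul_comm, pow_mul, Real.sq_sqrt (by linarith)]
    _ ≤ B * m ^ (2 * α) := pow_ceil_mul_logb_le hB (by positivity) hm
    _ ≤ B ^ 2 * m ^ (2 * α) := by gcongr; nlinarith
    _ = (B * m ^ α) ^ 2 := by
      rw [mul_pow, mul_comm 2, Real.rpow_mul (by linarith), Real.rpow_two]

lemma floor_mul_logb_le_of_rpow_le {b : ℝ} (hb : 1 < b) (hm : 0 < m) {n : ℕ}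
    (h : m ^ α ≤ b ^ n) : ⌊α * Real.logb b m⌋₊ ≤ n := by
  refine Nat.floor_le_of_le ?_
  rwa [← Real.logb_rpow_eq_mul_logb_of_pos hm, Real.logb_le_iff_le_rpow hb (by positivity),
    Real.rpow_natCast]

lemma exists_height (hd : 2 ≤ d) (hα : 0 ≤ α) (hm : 1 ≤ m) :
    ∃ k : ℕ,
      2 * (1 + 4 * d * √(2 * d - 1) ^ ⌈2 * α * Real.logb (2 * d - 1) m⌉₊) < (d : ℝ) ^ (k + 1) ∧
      ⌊α * Real.logb d m⌋₊ ≤ k + 1 ∧ 2 * (d : ℝ) ^ (k + 2) ≤ 36 * d ^ 4 * m ^ α := by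
  have hd' : (2 : ℝ) ≤ d := by exact_mod_cast hd
  have hM : 1 ≤ m ^ α := Real.one_le_rpow hm hα
  have hdM : 1 ≤ d ^ 2 * m ^ α := one_le_mul_of_one_le_of_one_le (one_le_pow₀ (by linarith)) hM
  have hroot : √(2 * d - 1) ^ ⌈2 * α * Real.logb (2 * d - 1) m⌉₊ ≤ 2 * d * m ^ α :=
    (sqrt_pow_ceil_two_mul_logb_le (by linarith) hα hm).trans (by gcongr; linarith)
  obtain ⟨k, hk, hk'⟩ := exists_nat_pow_near (x := 18 * (d ^ 2 * m ^ α)) (by linarith)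
    (show 1 < (d : ℝ) by linarith)
  refine ⟨k, ?_, floor_mul_logb_le_of_rpow_le (by linarith) (by linarith) ?_, ?_⟩
  · calc _ ≤ 2 * (1 + 4 * d * (2 * d * m ^ α)) := by gcongr
      _ = 2 + 16 * (d ^ 2 * m ^ α) := by ring
      _ ≤ 18 * (d ^ 2 * m ^ α) := by linarith
      _ < _ := hk'
  · have : m ^ α ≤ d ^ 2 * m ^ α := le_mul_of_one_le_left (by linarith) (one_le_pow₀ (by linarith))
    linarith
  · calc 2 * (d : ℝ) ^ (k + 2) = 2 * (d ^ k * d ^ 2) := by rw [pow_add]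
      _ ≤ 2 * (18 * (d ^ 2 * m ^ α) * d ^ 2) := by gcongr
      _ = 36 * d ^ 4 * m ^ α := by ring

lemma eventually_mul_rpow_le {β : ℝ} (hβ : β < 1) (K : ℝ) :
    ∀ᶠ x : ℝ in atTop, K * x ^ β ≤ x := by
  filter_upwards [(tendsto_rpow_atTop (sub_pos.2 hβ)).eventually_ge_atTop K,
    eventually_gt_atTop 0] with x hx hx0
  calc K * x ^ β ≤ x ^ (1 - β) * x ^ β := by gcongr
    _ = x := by rw [← Real.rpow_add hx0]; simp

lemma eventually_size_le (hd : 2 ≤ d) (hα : α ∈ Set.Ioo (0 : ℝ) (1 / 2)) (K : ℝ) :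
    ∀ᶠ m : ℝ in atTop,
      K * m ^ α + 2 * (1 + 2 * (d + 1) * d ^ ⌈2 * α * Real.logb (2 * d - 1) m⌉₊) ≤ m / 2 := by
  have hd' : (2 : ℝ) ≤ d := by exact_mod_cast hd
  filter_upwards [eventually_ge_atTop 1, eventually_mul_rpow_le (β := 2 * α)
    (by linarith [hα.2]) (2 * (|K| + 2 * (1 + 2 * (d + 1) * (2 * d))))] with m hm hlarge
  have hm' : 1 ≤ m ^ (2 * α) := Real.one_le_rpow hm (by linarith [hα.1])
  have hpow : (d : ℝ) ^ ⌈2 * α * Real.logb (2 * d - 1) m⌉₊ ≤ 2 * d * m ^ (2 * α) :=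
    calc _ ≤ (2 * d - 1 : ℝ) ^ ⌈2 * α * Real.logb (2 * d - 1) m⌉₊ := by gcongr; linarith
      _ ≤ (2 * d - 1) * m ^ (2 * α) :=
        pow_ceil_mul_logb_le (by linarith) (by linarith [hα.1]) hm
      _ ≤ 2 * d * m ^ (2 * α) := by gcongr; linarith
  have hK : K * m ^ α ≤ |K| * m ^ (2 * α) := by
    gcongr
    · exact le_abs_self K
    · linarith [hα.1]
  calc _ ≤ |K| * m ^ (2 * α) + 2 * (m ^ (2 * α) + 2 * (d + 1) * (2 * d * m ^ (2 * α))) := by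
        gcongr
    _ = 2 * (|K| + 2 * (1 + 2 * (d + 1) * (2 * d))) * m ^ (2 * α) / 2 := by ring
    _ ≤ m / 2 := by linarith

theorem eventually_exists_regular_localized (hd : 2 ≤ d) (hα : α ∈ Set.Ioo (0 : ℝ) (1 / 2)) :
    ∀ᶠ n : ℕ in atTop, ∃ G : SimpleGraph (Fin (n * 2)), IsRegular G (d + 1) ∧
      girthGe G (2 * α * Real.logb (2 * (d : ℝ) - 1) (n * 2 : ℕ)) ∧
      ∀ ε ≤ 1, LocalizedSpectrum G ⌊α * Real.logb d (n * 2 : ℕ)⌋₊ ε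
        (36 * d ^ 4 * ((n * 2 : ℕ) : ℝ) ^ α) := by
  have hd' : (2 : ℝ) ≤ d := by exact_mod_cast hd
  have hm : Tendsto (fun n : ℕ => ((n * 2 : ℕ) : ℝ)) atTop atTop :=
    tendsto_natCast_atTop_atTop.comp (tendsto_id.atTop_mul_const' two_pos)
  have hlog : Tendsto (fun m => 2 * α * Real.logb (2 * (d : ℝ) - 1) m) atTop atTop :=
    (Real.tendsto_logb_atTop (by linarith)).const_mul_atTop (by linarith [hα.1])
  filter_upwards [eventually_gt_atTop 0, hm.eventually_ge_atTop 1,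
    hm.eventually (hlog.eventually_gt_atTop 2),
    hm.eventually (eventually_size_le hd hα (36 * d ^ 4))] with n hn hn1 hg hsize
  obtain ⟨k, hk, hfloor, hbound⟩ := exists_height hd hα.1.le hn1
  set g := ⌈2 * α * Real.logb (2 * (d : ℝ) - 1) (n * 2 : ℕ)⌉₊
  have hcard : 2 * d ^ (k + 2) + 2 * (1 + 2 * (d + 1) * d ^ g) ≤ n := by
    have hhalf : ((n * 2 : ℕ) : ℝ) / 2 = n := by push_cast; ring
    rw [hhalf] at hsize
    exact_mod_cast (add_le_add_left hbound _).trans hsize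
  obtain ⟨G, hreg, hgirth, hspec⟩ := exists_regular_localized hd
    (Nat.lt_ceil.2 (by exact_mod_cast hg)) hk hcard (Fintype.card_fin _)
  have : NeZero n := ⟨hn.ne'⟩
  exact ⟨G, hreg, girthGe_of_le_egirth hgirth
    (not_isAcyclic_of_two_le_ncard fun v => by rw [hreg]; omega) (Nat.le_ceil _),
    fun ε hε => (hspec _ hfloor ε hε).mono hbound⟩

theorem stmt_1_general (hd : 2 ≤ d) (hα : α ∈ Set.Ioo (0 : ℝ) (1 / 2)) {ε : ℝ} (hε : ε ≤ 1) :
    ∃ C : ℝ, 0 < C ∧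
      {m : ℕ | 0 < m ∧ ∃ G : SimpleGraph (Fin m),
        IsRegular G (d + 1) ∧
        girthGe G (2 * α * Real.logb (2 * (d : ℝ) - 1) m) ∧
        LocalizedSpectrum G ⌊α * Real.logb d m⌋₊ ε (C * (m : ℝ) ^ α)}.Infinite := by
  refine ⟨36 * d ^ 4, by positivity, Set.infinite_of_forall_exists_gt fun N => ?_⟩
  obtain ⟨n, ⟨G, hreg, hgirth, hspec⟩, hn⟩ :=
    ((eventually_exists_regular_localized hd hα).and (eventually_gt_atTop N)).exists
  exact ⟨n * 2, ⟨by omega, G, hreg, hgirth, hspec ε hε⟩, by omega⟩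

end Parameters

/-- Theorem 1.2, general degrees between consecutive primes. -/
theorem stmt_1 (j : ℕ) (hj : 1 ≤ j) (d : ℕ)
    (hd₁ : nthPrime j ≤ d) (hd₂ : d ≤ nthPrime (j + 1))
    (α : ℝ) (hα : α ∈ Set.Ioo (0 : ℝ) (1 / 6))
    (hratio : Real.log (nthPrime j) / Real.log (nthPrime (j + 1)) > 6 * α)
    (ε : ℝ) (hε : ε ∈ Set.Ioo (0 : ℝ) 1) :
    ∃ C : ℝ, 0 < C ∧
      {m : ℕ | 0 < m ∧ ∃ G : SimpleGraph (Fin m),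
        IsRegular G (d + 1) ∧
        girthGe G (2 * α * Real.logb (2 * (d : ℝ) - 1) m) ∧
        LocalizedSpectrum G ⌊α * Real.logb d m⌋₊ ε (C * (m : ℝ) ^ α)}.Infinite := by
  exact stmt_1_general ((Nat.prime_nth_prime (j - 1)).two_le.trans hd₁)
    ⟨hα.1, hα.2.trans (by norm_num)⟩ hε.2.le

end Formal
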